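/- arXiv:1911.04718 — 4 statements merged into one kernel-verified Lean document; each statement's English description precedes it below -/
import Mathlib

section
/- Let f : ℝ/ℤ → [0,1] be an integrable Borel function with f ≢ 0 and f ≢ 1 (neither f = 0 almost everywhere nor f = 1 almost everywhere). Then for every integer ℓ ≥ 1, the ψ-function of the stationary determinantal measure μ_f satisfies ψ_{μ_f}(ℓ) ≥ 1 − exp( −(1/(ℓ+1)) · Σ_{n=ℓ+1}^∞ n·|f̂(n)|² ). -/
open MeasureTheory Filter Matrix
open scoped ENNReal

noncomputable def fhat (f : AddCircle (1:ℝ) → ℝ) (n : ℤ) : ℂ :=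
  fourierCoeff (fun t => (f t : ℂ)) n

/-- The stationary determinantal measure condition. -/
def IsDeterminantal (f : AddCircle (1:ℝ) → ℝ) (μ : Measure (ℤ → Bool)) : Prop :=
  ∀ s : Finset ℤ,
    ((μ {x | ∀ n ∈ s, x n = true}).toReal : ℂ) =
      Matrix.det (Matrix.of fun i j : s => fhat f ((i:ℤ) - (j:ℤ)))

/-- σ-algebra generated by the coordinates in S. -/
def coordSigma (S : Set ℤ) : MeasurableSpace (ℤ → Bool) :=
  MeasurableSpace.comap (fun x (n : S) => x (n : ℤ)) inferInstance

noncomputable def psi (μ : Measure (ℤ → Bool)) (ℓ : ℕ) : ℝ≥0∞ :=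
  ⨆ (A : Set (ℤ → Bool)) (_ : MeasurableSet[coordSigma {n : ℤ | n ≤ 0}] A) (_ : 0 < μ A)
    (B : Set (ℤ → Bool)) (_ : MeasurableSet[coordSigma {n : ℤ | (ℓ : ℤ) ≤ n}] B) (_ : 0 < μ B),
      ENNReal.ofReal |(μ (A ∩ B)).toReal / ((μ A).toReal * (μ B).toReal) - 1|

noncomputable def expNegE (x : ℝ≥0∞) : ℝ≥0∞ :=
  if x = ⊤ then 0 else ENNReal.ofReal (Real.exp (-x.toReal))

section PsiAux

open scoped ComplexOrder

open scoped MatrixOrder Matrix.Norms.L2Operator in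
lemma psd_factor {ι : Type*} [Fintype ι] [DecidableEq ι] {X : Matrix ι ι ℂ}
    (hX : X.PosSemidef) : ∃ R : Matrix ι ι ℂ, X = Rᴴ * R := by
  have := (CStarAlgebra.nonneg_iff_eq_star_mul_self (a := X)).1 hX.nonneg
  simpa [Matrix.star_eq_conjTranspose] using this

lemma trace_mul_nonneg' {ι : Type*} [Fintype ι] [DecidableEq ι] {X Y : Matrix ι ι ℂ}
    (hX : X.PosSemidef) (hY : Y.PosSemidef) : 0 ≤ (X * Y).trace := by
  obtain ⟨R, rfl⟩ := psd_factor hX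
  rw [Matrix.mul_assoc, Matrix.trace_mul_comm]
  exact (hY.mul_mul_conjTranspose_same R).trace_nonneg

lemma inv_sub_one_psd {ι : Type*} [Fintype ι] [DecidableEq ι] {P : Matrix ι ι ℂ}
    (hP : P.PosDef) (h1 : (1 - P).PosSemidef) : (P⁻¹ - 1).PosSemidef := by
  have hu : IsUnit P.det := (Matrix.isUnit_iff_isUnit_det _).1 hP.isUnit
  have e : P⁻¹ - 1 = (1 - P) + (1 - P) * P⁻¹ * (1 - P)ᴴ := by
    rw [h1.1.eq]
    simp [Matrix.sub_mul, Matrix.mul_sub, Matrix.mul_nonsing_inv _ hu, Matrix.nonsing_inv_mul _ hu]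
  rw [e]
  exact h1.add (hP.inv.posSemidef.mul_mul_conjTranspose_same _)

lemma det_psd_le {ι : Type*} [Fintype ι] [DecidableEq ι] {H : Matrix ι ι ℂ}
    (hH : H.PosSemidef) : H.det.re ≤ Real.exp (H.trace.re - Fintype.card ι) := by
  rw [hH.1.det_eq_prod_eigenvalues, hH.1.trace_eq_sum_eigenvalues]
  have e1 : (∏ i, ((hH.1.eigenvalues i : ℝ) : ℂ)).re = ∏ i, hH.1.eigenvalues i := by
    rw [← Complex.ofReal_prod, Complex.ofReal_re]
  have e2 : (∑ i, ((hH.1.eigenvalues i : ℝ) : ℂ)).re = ∑ i, hH.1.eigenvalues i := by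
    rw [← Complex.ofReal_sum, Complex.ofReal_re]
  erw [e1, e2]
  have : (∑ i, hH.1.eigenvalues i) - Fintype.card ι = ∑ i, (hH.1.eigenvalues i - 1) := by
    simp
  rw [this, Real.exp_sum]
  apply Finset.prod_le_prod
  · intro i _; exact hH.eigenvalues_nonneg i
  · intro i _
    have := Real.add_one_le_exp (hH.1.eigenvalues i - 1)
    linarith

lemma det_le_det_mul {ι : Type*} [Fintype ι] [DecidableEq ι] {P D : Matrix ι ι ℂ}
    (hP : P.PosDef) (h1 : (1 - P).PosSemidef) (hD : D.PosSemidef) (hQ : (P - D).PosSemidef) :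
    (P - D).det.re ≤ P.det.re * Real.exp (-D.trace.re) := by
  have hu : IsUnit P.det := (Matrix.isUnit_iff_isUnit_det _).1 hP.isUnit
  obtain ⟨R, hR⟩ := psd_factor hP.inv.posSemidef
  have h := det_psd_le (hQ.mul_mul_conjTranspose_same R)
  have ed : (R * (P - D) * Rᴴ).det = P.det⁻¹ * (P - D).det := by
    rw [Matrix.det_mul_right_comm, Matrix.det_mul, Matrix.det_mul_comm, ← hR, Matrix.det_nonsing_inv]
    simp
  have et : (R * (P - D) * Rᴴ).trace = Fintype.card ι - (P⁻¹ * D).trace := by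
    rw [Matrix.trace_mul_comm, ← Matrix.mul_assoc, ← hR, Matrix.mul_sub, Matrix.nonsing_inv_mul _ hu,
      Matrix.trace_sub, Matrix.trace_one]
  have hpos := hP.det_pos
  have hre : P.det = (P.det.re : ℂ) := by
    apply Complex.ext <;> simp
    exact (Complex.lt_def.1 hpos).2.symm
  have hpos' : 0 < P.det.re := (Complex.lt_def.1 hpos).1
  have htr := trace_mul_nonneg' (inv_sub_one_psd hP h1) hD
  rw [Matrix.sub_mul, Matrix.one_mul, Matrix.trace_sub] at htr
  have htr' := (Complex.le_def.1 htr).1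
  rw [ed, et, hre, ← Complex.ofReal_inv, Complex.re_ofReal_mul] at h
  simp only [Complex.sub_re, Complex.zero_re, Complex.natCast_re] at h htr'
  rw [inv_mul_le_iff₀ hpos'] at h
  refine h.trans (mul_le_mul_of_nonneg_left (Real.exp_le_exp.2 ?_) hpos'.le)
  linarith


lemma block_det {m n : Type*} [Fintype m] [DecidableEq m] [Fintype n] [DecidableEq n]
    {A : Matrix m m ℂ} {D : Matrix n n ℂ} {B : Matrix m n ℂ}
    (hA : A.PosDef) (hA1 : (1 - A).PosSemidef) (hD : D.PosDef) (hD1 : (1 - D).PosSemidef)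
    (hM : (fromBlocks A B Bᴴ D).PosSemidef) :
    (fromBlocks A B Bᴴ D).det.re ≤
      A.det.re * D.det.re * Real.exp (-∑ i, ∑ j, ‖B i j‖ ^ 2) := by
  have : Invertible A := hA.isUnit.invertible
  have hS := (Matrix.PosDef.fromBlocks₁₁ B D hA).1 hM
  have hre : A.det = (A.det.re : ℂ) := by
    apply Complex.ext <;> simp
    exact (Complex.lt_def.1 hA.det_pos).2.symm
  have hpos' : 0 < A.det.re := (Complex.lt_def.1 hA.det_pos).1
  have hposD : 0 < D.det.re := (Complex.lt_def.1 hD.det_pos).1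
  have hC : (Bᴴ * A⁻¹ * B).PosSemidef := hA.inv.posSemidef.conjTranspose_mul_mul_same B
  have h := det_le_det_mul hD hD1 hC hS
  rw [Matrix.det_fromBlocks₁₁, hre, Complex.re_ofReal_mul, Complex.ofReal_re, mul_assoc,
    Matrix.invOf_eq_nonsing_inv]
  refine mul_le_mul_of_nonneg_left (h.trans ?_) hpos'.le
  refine mul_le_mul_of_nonneg_left (Real.exp_le_exp.2 (neg_le_neg ?_)) hposD.le
  have h2 := ((inv_sub_one_psd hA hA1).conjTranspose_mul_mul_same B).trace_nonneg
  rw [Matrix.mul_sub, Matrix.sub_mul, Matrix.mul_one, Matrix.trace_sub] at h2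
  have h3 := (Complex.le_def.1 h2).1
  simp only [Complex.sub_re, Complex.zero_re] at h3
  have h4 : (Bᴴ * B).trace.re = ∑ i, ∑ j, ‖B i j‖ ^ 2 := by
    rw [Finset.sum_comm]
    simp only [Matrix.trace, Matrix.diag, Matrix.mul_apply, Matrix.conjTranspose_apply,
      Complex.re_sum]
    refine Finset.sum_congr rfl fun j _ => Finset.sum_congr rfl fun i _ => ?_
    rw [← Complex.normSq_eq_norm_sq]
    simp [Complex.normSq_apply]
  linarith

noncomputable def Km (g : AddCircle (1:ℝ) → ℝ) {ι : Type*} (e : ι → ℤ) : Matrix ι ι ℂ :=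
  Matrix.of fun i j => fhat g (e i - e j)

lemma Km_quad (g : AddCircle (1:ℝ) → ℝ) (hg : Integrable g) {ι : Type*} [Fintype ι] (e : ι → ℤ)
    (v : ι → ℂ) :
    star v ⬝ᵥ (Km g e *ᵥ v) = ((∫ t, g t * ‖∑ j, v j * fourier (e j) t‖ ^ 2 : ℝ) : ℂ) := by
  have hgc : Integrable (fun t => (g t : ℂ)) := hg.ofReal
  have key : ∀ n : ℤ, Integrable (fun t : AddCircle (1:ℝ) => fourier n t * (g t : ℂ)) := by
    intro n
    refine hgc.bdd_mul (c := 1) (fourier n).continuous.aestronglyMeasurable ?_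
    exact Eventually.of_forall fun t => (Circle.norm_coe _).le
  have hf : ∀ n, fhat g n = ∫ t, fourier (-n) t * (g t : ℂ) := by
    intro n
    simp [fhat, fourierCoeff, AddCircle.integral_haarAddCircle]
  have hpt : ∀ t, ((g t * ‖∑ j, v j * fourier (e j) t‖ ^ 2 : ℝ) : ℂ) =
      ∑ i, ∑ j, (star (v i) * v j) * (fourier (-(e i - e j)) t * (g t : ℂ)) := by
    intro t
    push_cast
    rw [← Complex.conj_mul', map_sum, Finset.sum_mul_sum, Finset.mul_sum]
    refine Finset.sum_congr rfl fun i _ => ?_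
    rw [Finset.mul_sum]
    refine Finset.sum_congr rfl fun j _ => ?_
    rw [show -(e i - e j) = -e i + e j by ring, fourier_add, fourier_neg]
    simp only [map_mul, starRingEnd_apply]
    ring
  rw [← integral_complex_ofReal]
  simp_rw [hpt]
  rw [integral_finsetSum _ fun i _ => integrable_finsetSum _ fun j _ => (key _).const_mul _]
  simp only [dotProduct, mulVec, Finset.mul_sum]
  refine Finset.sum_congr rfl fun i _ => ?_
  rw [integral_finsetSum _ fun j _ => (key _).const_mul _]
  refine Finset.sum_congr rfl fun j _ => ?_
  rw [integral_const_mul, ← hf]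
  simp only [Km, Matrix.of_apply, Pi.star_apply]
  ring

lemma fhat_conj (g : AddCircle (1:ℝ) → ℝ) (n : ℤ) : star (fhat g n) = fhat g (-n) := by
  simp only [fhat, fourierCoeff]
  rw [← starRingEnd_apply, ← integral_conj]
  congr 1
  ext t
  simp [fourier_neg, -fourier_apply]

lemma Km_herm (g : AddCircle (1:ℝ) → ℝ) {ι : Type*} (e : ι → ℤ) : (Km g e).IsHermitian := by
  ext i j
  simp [Km, fhat_conj]

lemma Km_psd (g : AddCircle (1:ℝ) → ℝ) (hg : Integrable g) (h0 : ∀ t, 0 ≤ g t)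
    {ι : Type*} [Fintype ι] (e : ι → ℤ) : (Km g e).PosSemidef := by
  refine .of_dotProduct_mulVec_nonneg (Km_herm g e) fun v => ?_
  rw [Km_quad g hg]
  have : 0 ≤ ∫ t, g t * ‖∑ j, v j * fourier (e j) t‖ ^ 2 :=
    integral_nonneg fun t => mul_nonneg (h0 t) (by positivity)
  exact_mod_cast this

lemma trig_zero {ι : Type*} [Fintype ι] (e : ι → ℤ) (he : Function.Injective e)
    (v : ι → ℂ) (hv : v ≠ 0) :
    {t : AddCircle (1:ℝ) | ∑ j, v j * fourier (e j) t = 0}.Finite := by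
  classical
  obtain ⟨m, hm⟩ : ∃ m : ℤ, ∀ i, m ≤ e i := (Set.finite_range e).bddBelow.imp
    fun m h i => h ⟨i, rfl⟩
  let q : Polynomial ℂ := ∑ j, Polynomial.monomial (e j - m).toNat (v j)
  have hq : q ≠ 0 := by
    obtain ⟨i, hi⟩ := Function.ne_iff.1 hv
    intro h
    apply hi
    have h2 := congrArg (fun p => Polynomial.coeff p (e i - m).toNat) h
    simp only [q, Polynomial.finsetSum_coeff, Polynomial.coeff_monomial, Polynomial.coeff_zero] at h2
    rw [Finset.sum_eq_single i] at h2
    · simpa using h2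
    · intro j _ hj
      rw [if_neg]
      intro h3
      apply hj
      apply he
      have := hm i; have := hm j
      omega
    · simp
  have hinj : Function.Injective (fun t : AddCircle (1:ℝ) => (AddCircle.toCircle t : ℂ)) :=
    Subtype.coe_injective.comp (AddCircle.injective_toCircle one_ne_zero)
  refine ((q.roots.toFinset.finite_toSet).preimage hinj.injOn).subset ?_
  intro t ht
  simp only [Set.mem_ofPred_eq] at ht
  simp only [Set.mem_preimage, Finset.mem_coe, Multiset.mem_toFinset, Polynomial.mem_roots hq,
    Polynomial.IsRoot.def]
  have : q.eval (AddCircle.toCircle t : ℂ) = fourier (-m) t * ∑ j, v j * fourier (e j) t := by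
    simp only [q, Polynomial.eval_finsetSum, Polynomial.eval_monomial, Finset.mul_sum]
    refine Finset.sum_congr rfl fun j _ => ?_
    have : fourier (-m) t * fourier (e j) t = (AddCircle.toCircle t : ℂ) ^ (e j - m).toNat := by
      rw [← fourier_add, show -m + e j = (((e j - m).toNat : ℕ) : ℤ) by have := hm j; omega]
      rw [fourier_apply, natCast_zsmul, AddCircle.toCircle_nsmul]
      simp
    rw [← this]; ring
  rw [this, ht, mul_zero]

lemma Km_pd (g : AddCircle (1:ℝ) → ℝ) (hg : Integrable g) (h0 : ∀ t, 0 ≤ g t)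
    (hne0 : ¬ (∀ᵐ t : AddCircle (1:ℝ), g t = 0))
    {ι : Type*} [Fintype ι] (e : ι → ℤ) (he : Function.Injective e) : (Km g e).PosDef := by
  refine .of_dotProduct_mulVec_pos (Km_herm g e) fun v hv => ?_
  rw [Km_quad g hg]
  have hnn : ∀ t, 0 ≤ g t * ‖∑ j, v j * fourier (e j) t‖ ^ 2 :=
    fun t => mul_nonneg (h0 t) (by positivity)
  have hpos : 0 ≤ ∫ t, g t * ‖∑ j, v j * fourier (e j) t‖ ^ 2 := integral_nonneg hnn
  have hint : Integrable (fun t => g t * ‖∑ j, v j * fourier (e j) t‖ ^ 2) := by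
    have hc : Continuous (fun t : AddCircle (1:ℝ) => ‖∑ j, v j * fourier (e j) t‖ ^ 2) := by
      refine (continuous_norm.comp (continuous_finsetSum _ fun j _ => ?_)).pow 2
      exact continuous_const.mul (fourier (e j)).continuous
    obtain ⟨C, hC⟩ := isCompact_univ.exists_bound_of_continuousOn hc.continuousOn
    exact hg.mul_bdd (c := C) hc.aestronglyMeasurable (Eventually.of_forall fun t => hC t trivial)
  have hne : (∫ t, g t * ‖∑ j, v j * fourier (e j) t‖ ^ 2) ≠ 0 := by
    intro h
    rw [integral_eq_zero_iff_of_nonneg hnn hint] at h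
    apply hne0
    have hfin := trig_zero e he v hv
    have hz : volume {t : AddCircle (1:ℝ) | ∑ j, v j * fourier (e j) t = 0} = 0 := by
      refine (measure_null_iff_singleton hfin.countable).2 fun x _ => ?_
      have := AddCircle.volume_closedBall (T := 1) (x := x) 0
      simpa using this
    filter_upwards [h, measure_eq_zero_iff_ae_notMem.1 hz] with t ht1 ht2
    simp only [Pi.zero_apply, mul_eq_zero] at ht1
    rcases ht1 with h | h
    · exact h
    · exact absurd (by simpa using h) ht2
  have := lt_of_le_of_ne hpos hne.symm
  exact_mod_cast this

lemma Km_compl (g : AddCircle (1:ℝ) → ℝ) (hg : Integrable g) {ι : Type*} [Fintype ι]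
    [DecidableEq ι] (e : ι → ℤ) (he : Function.Injective e) :
    Km (fun t => 1 - g t) e = 1 - Km g e := by
  have hgc : Integrable (fun t => (g t : ℂ)) := hg.ofReal
  ext i j
  have key : ∀ n : ℤ, Integrable (fun t : AddCircle (1:ℝ) => fourier n t * (g t : ℂ)) := by
    intro n
    refine hgc.bdd_mul (c := 1) (fourier n).continuous.aestronglyMeasurable ?_
    exact Eventually.of_forall fun t => (Circle.norm_coe _).le
  have hf : ∀ (g : AddCircle (1:ℝ) → ℝ) n, fhat g n = ∫ t, fourier (-n) t * (g t : ℂ) := by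
    intro g n
    simp [fhat, fourierCoeff, AddCircle.integral_haarAddCircle]
  have h1 : ∀ n : ℤ, ∫ t : AddCircle (1:ℝ), fourier n t = if n = 0 then 1 else 0 := by
    intro n
    have := congrFun (fourierCoeff_fourier (T := 1) n) 0
    simp only [fourierCoeff, AddCircle.integral_haarAddCircle] at this
    simp only [neg_zero, fourier_zero, one_smul, inv_one, Pi.single_apply] at this
    rw [this]; simp [eq_comm]
  have hi : ∀ n : ℤ, Integrable (fun t : AddCircle (1:ℝ) => fourier n t) := fun n =>
    (fourier n).continuous.integrable_of_hasCompactSupport (HasCompactSupport.of_compactSpace _)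
  simp only [Km, Matrix.of_apply, Matrix.sub_apply, hf]
  push_cast
  simp_rw [mul_sub, mul_one]
  rw [integral_sub (hi _) (key _), h1, Matrix.one_apply]
  congr 1
  by_cases h : i = j
  · simp [h]
  · have : e i ≠ e j := fun h' => h (he h')
    rw [if_neg h, if_neg]
    omega

lemma det_ineq (f : AddCircle (1:ℝ) → ℝ)
    (h0 : ∀ t, 0 ≤ f t) (h1 : ∀ t, f t ≤ 1) (hint : Integrable f)
    (hne0 : ¬ (∀ᵐ t : AddCircle (1:ℝ), f t = 0))
    (μ : Measure (ℤ → Bool)) (hdet : IsDeterminantal f μ) (s : Finset ℤ) :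
    0 < (μ {x | ∀ n ∈ s, x n = true}).toReal ∧ ∀ t : Finset ℤ, Disjoint s t →
    (μ {x | ∀ n ∈ s ∪ t, x n = true}).toReal ≤
      (μ {x | ∀ n ∈ s, x n = true}).toReal * (μ {x | ∀ n ∈ t, x n = true}).toReal *
        Real.exp (-∑ i ∈ s, ∑ j ∈ t, ‖fhat f (i - j)‖ ^ 2) := by
  have hi1 : Integrable (fun t => 1 - f t) := (integrable_const 1).sub hint
  have hre : ∀ s : Finset ℤ, (μ {x | ∀ n ∈ s, x n = true}).toReal =
      (Km f (fun i : s => (i : ℤ))).det.re := by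
    intro s
    have := congrArg Complex.re (hdet s)
    rw [Complex.ofReal_re] at this
    exact this
  have pd : ∀ s : Finset ℤ, (Km f (fun i : s => (i : ℤ))).PosDef := fun s =>
    Km_pd f hint h0 hne0 _ Subtype.coe_injective
  have le1 : ∀ s : Finset ℤ, (1 - Km f (fun i : s => (i : ℤ))).PosSemidef := fun s => by
    rw [← Km_compl f hint _ Subtype.coe_injective]
    exact Km_psd _ hi1 (fun t => sub_nonneg.2 (h1 t)) _
  refine ⟨by rw [hre]; exact (Complex.lt_def.1 (pd s).det_pos).1, fun t hst => ?_⟩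
  let B : Matrix s t ℂ := Matrix.of fun i j => fhat f ((i : ℤ) - (j : ℤ))
  have hM : fromBlocks (Km f (fun i : s => (i : ℤ))) B Bᴴ (Km f (fun i : t => (i : ℤ))) =
      Km f (Sum.elim (fun i : s => (i : ℤ)) (fun i : t => (i : ℤ))) := by
    ext i j
    rcases i with i | i <;> rcases j with j | j <;> simp [Km, B, fhat_conj]
  have hblk := block_det (pd s) (le1 s) (pd t) (le1 t) (B := B)
    (by rw [hM]; exact Km_psd f hint h0 _)
  have hu : (Km f (fun i : (s ∪ t : Finset ℤ) => (i : ℤ))).det =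
      (fromBlocks (Km f (fun i : s => (i : ℤ))) B Bᴴ (Km f (fun i : t => (i : ℤ)))).det := by
    rw [hM, ← Matrix.det_submatrix_equiv_self (Equiv.Finset.union s t hst)]
    congr 1
    ext i j
    rcases i with i | i <;> rcases j with j | j <;> simp [Km]
  rw [hre, hre s, hre t, hu]
  convert hblk using 4
  rw [← Finset.sum_coe_sort s]
  refine Finset.sum_congr rfl fun i _ => ?_
  rw [← Finset.sum_coe_sort t]
  rfl

lemma sum_ineq (F : ℤ → ℝ) (hF : ∀ n, 0 ≤ F n) (ℓ N : ℕ) :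
    ∑ n ∈ Finset.range N, (if ℓ + 1 ≤ n then (n : ℝ) * F n else 0) ≤ (ℓ + 1) *
      ∑ i ∈ Finset.Icc (ℓ : ℤ) (ℓ + N), ∑ j ∈ Finset.Icc (-(N : ℤ)) 0, F (i - j) := by
  have step : ∀ n ∈ Finset.range N, (if ℓ + 1 ≤ n then (n : ℝ) * F n else 0) ≤
      (ℓ + 1) * ∑ a ∈ Finset.range (if ℓ + 1 ≤ n then n - ℓ + 1 else 0), F n := by
    intro n _
    split_ifs with h
    · simp only [Finset.sum_const, Finset.card_range, nsmul_eq_mul]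
      rw [← mul_assoc]
      refine mul_le_mul_of_nonneg_right ?_ (hF _)
      obtain ⟨k, rfl⟩ := Nat.exists_eq_add_of_le h
      rw [show ℓ + 1 + k - ℓ + 1 = k + 2 by omega]
      push_cast
      have : (0:ℝ) ≤ ℓ := by positivity
      have : (0:ℝ) ≤ k := by positivity
      nlinarith [mul_nonneg ‹(0:ℝ) ≤ ℓ› ‹(0:ℝ) ≤ k›]
    · simp
  refine (Finset.sum_le_sum step).trans ?_
  rw [← Finset.mul_sum]
  refine mul_le_mul_of_nonneg_left ?_ (by positivity)
  rw [Finset.sum_sigma', ← Finset.sum_product']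
  have hinj : Set.InjOn (fun x : (Σ _ : ℕ, ℕ) => (((x.1 : ℤ) - x.2, -(x.2 : ℤ)) : ℤ × ℤ))
      ((Finset.range N).sigma fun n => Finset.range (if ℓ + 1 ≤ n then n - ℓ + 1 else 0)) := by
    rintro ⟨n, a⟩ _ ⟨m, b⟩ _ h
    simp only [Prod.mk.injEq] at h
    obtain ⟨h1, h2⟩ := h
    have : a = b := by omega
    have : n = m := by omega
    subst_vars; rfl
  calc _ = ∑ y ∈ ((Finset.range N).sigma fun n =>
          Finset.range (if ℓ + 1 ≤ n then n - ℓ + 1 else 0)).image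
          (fun x : (Σ _ : ℕ, ℕ) => (((x.1 : ℤ) - x.2, -(x.2 : ℤ)) : ℤ × ℤ)), F (y.1 - y.2) := by
        rw [Finset.sum_image hinj]
        refine Finset.sum_congr rfl fun x _ => ?_
        congr 1; ring
    _ ≤ _ := by
        refine Finset.sum_le_sum_of_subset_of_nonneg ?_ fun _ _ _ => hF _
        intro y hy
        simp only [Finset.mem_image, Finset.mem_sigma, Finset.mem_range] at hy
        obtain ⟨⟨n, a⟩, ⟨h1, h2⟩, rfl⟩ := hy
        simp only at h1 h2
        split_ifs at h2 with h
        · simp only [Finset.mem_product, Finset.mem_Icc]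
          omega
        · omega

lemma meas_cyl (S : Set ℤ) (s : Finset ℤ) (h : ∀ n ∈ s, n ∈ S) :
    MeasurableSet[coordSigma S] {x : ℤ → Bool | ∀ n ∈ s, x n = true} := by
  refine ⟨⋂ n : S, ⋂ _ : (n : ℤ) ∈ s, (fun y : S → Bool => y n) ⁻¹' {true}, ?_, ?_⟩
  · refine MeasurableSet.iInter fun n => MeasurableSet.iInter fun _ => ?_
    exact measurable_pi_apply n (MeasurableSet.singleton _)
  · ext x
    simp only [Set.mem_preimage, Set.mem_iInter, Set.mem_singleton_iff, Set.mem_ofPred_eq]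
    exact ⟨fun hx n hn => hx ⟨n, h n hn⟩ hn, fun hx n hn => hx n hn⟩

end PsiAux

theorem stmt0 (f : AddCircle (1:ℝ) → ℝ) (hmeas : Measurable f)
    (h0 : ∀ t, 0 ≤ f t) (h1 : ∀ t, f t ≤ 1) (hint : Integrable f)
    (hne0 : ¬ (∀ᵐ t : AddCircle (1:ℝ), f t = 0))
    (hne1 : ¬ (∀ᵐ t : AddCircle (1:ℝ), f t = 1))
    (μ : Measure (ℤ → Bool)) [IsProbabilityMeasure μ] (hdet : IsDeterminantal f μ)
    (ℓ : ℕ) (hℓ : 1 ≤ ℓ) :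
    1 - expNegE ((∑' n : ℕ, if ℓ + 1 ≤ n then ENNReal.ofReal ((n : ℝ) * ‖fhat f n‖ ^ 2) else 0)
        / ((ℓ : ℝ≥0∞) + 1)) ≤ psi μ ℓ := by
  classical
  set p := psi μ ℓ with hp
  let u : ℕ → ℝ := fun n => if ℓ + 1 ≤ n then (n : ℝ) * ‖fhat f n‖ ^ 2 else 0
  have hu0 : ∀ n, 0 ≤ u n := fun n => by simp only [u]; split_ifs <;> positivity
  have hu : ∀ n : ℕ, (if ℓ + 1 ≤ n then ENNReal.ofReal ((n : ℝ) * ‖fhat f n‖ ^ 2) else 0) =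
      ENNReal.ofReal (u n) := fun n => by simp only [u]; split_ifs <;> simp
  have hl : (0:ℝ) < ℓ + 1 := by positivity
  have key : ∀ N : ℕ, ENNReal.ofReal (1 - Real.exp (-((∑ n ∈ Finset.range N, u n) / (ℓ + 1)))) ≤ p := by
    intro N
    let s := Finset.Icc (ℓ : ℤ) (ℓ + N)
    let t := Finset.Icc (-(N : ℤ)) 0
    have hst : Disjoint s t := by
      rw [Finset.disjoint_left]
      intro a ha hb
      simp only [s, t, Finset.mem_Icc] at ha hb
      omega
    have hs := det_ineq f h0 h1 hint hne0 μ hdet s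
    have ht := (det_ineq f h0 h1 hint hne0 μ hdet t).1
    have hle := hs.2 t hst
    have hs := hs.1
    have hsum := sum_ineq (fun n => ‖fhat f n‖ ^ 2) (fun n => by positivity) ℓ N
    have hAB : {x : ℤ → Bool | ∀ n ∈ t, x n = true} ∩ {x | ∀ n ∈ s, x n = true} =
        {x | ∀ n ∈ s ∪ t, x n = true} := by
      ext x
      simp only [Set.mem_inter_iff, Set.mem_ofPred_eq, Finset.mem_union]
      constructor
      · rintro ⟨ha, hb⟩ n (h | h)
        exacts [hb n h, ha n h]
      · exact fun h => ⟨fun n hn => h n (Or.inr hn), fun n hn => h n (Or.inl hn)⟩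
    have hmem : ENNReal.ofReal |(μ ({x : ℤ → Bool | ∀ n ∈ t, x n = true} ∩
        {x | ∀ n ∈ s, x n = true})).toReal / ((μ {x | ∀ n ∈ t, x n = true}).toReal *
        (μ {x | ∀ n ∈ s, x n = true}).toReal) - 1| ≤ p := by
      rw [hp, psi]
      refine le_iSup_of_le {x : ℤ → Bool | ∀ n ∈ t, x n = true} <|
        le_iSup_of_le (meas_cyl _ _ fun n hn => (Finset.mem_Icc.1 hn).2) <|
        le_iSup_of_le (ENNReal.toReal_pos_iff.1 ht).1 <|
        le_iSup_of_le {x : ℤ → Bool | ∀ n ∈ s, x n = true} <|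
        le_iSup_of_le (meas_cyl _ _ fun n hn => (Finset.mem_Icc.1 hn).1) <|
        le_iSup_of_le (ENNReal.toReal_pos_iff.1 hs).1 le_rfl
    refine le_trans (ENNReal.ofReal_le_ofReal ?_) hmem
    rw [hAB, abs_sub_comm]
    refine le_trans (sub_le_sub_left ?_ 1) (le_abs_self _)
    rw [div_le_iff₀ (mul_pos ht hs)]
    refine hle.trans ?_
    rw [mul_comm, mul_comm (μ {x | ∀ n ∈ t, x n = true}).toReal]
    refine mul_le_mul_of_nonneg_right (Real.exp_le_exp.2 (neg_le_neg ?_)) (mul_pos hs ht).le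
    rw [div_le_iff₀' hl]
    exact hsum
  by_cases hp1 : 1 ≤ p
  · exact tsub_le_self.trans hp1
  push Not at hp1
  have hpt : p ≠ ⊤ := (hp1.trans ENNReal.one_lt_top).ne
  have hr1 : p.toReal < 1 := by
    simpa using (ENNReal.toReal_lt_toReal hpt ENNReal.one_ne_top).2 hp1
  set r := p.toReal with hr
  have hr0 : 0 ≤ r := ENNReal.toReal_nonneg
  have hlog : 0 ≤ -Real.log (1 - r) := by
    have := Real.log_nonpos (x := 1 - r) (by linarith) (by linarith)
    linarith
  have hpart : ∀ N : ℕ, (∑ n ∈ Finset.range N, u n) ≤ -Real.log (1 - r) * (ℓ + 1) := by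
    intro N
    have h := ENNReal.ofReal_le_iff_le_toReal hpt |>.1 (key N)
    rw [← div_le_iff₀ hl]
    have h2 : 1 - r ≤ Real.exp (-((∑ n ∈ Finset.range N, u n) / (ℓ + 1))) := by linarith
    have h3 := (Real.log_le_iff_le_exp (by linarith)).2 h2
    linarith
  set T := (∑' n : ℕ, if ℓ + 1 ≤ n then ENNReal.ofReal ((n : ℝ) * ‖fhat f n‖ ^ 2) else 0)
        / ((ℓ : ℝ≥0∞) + 1) with hT
  have hTle : T ≤ ENNReal.ofReal (-Real.log (1 - r)) := by
    rw [hT]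
    refine ENNReal.div_le_of_le_mul ?_
    simp_rw [hu]
    refine ENNReal.tsum_le_of_sum_range_le fun N => ?_
    rw [← ENNReal.ofReal_sum_of_nonneg fun i _ => hu0 i]
    refine (ENNReal.ofReal_le_ofReal (hpart N)).trans ?_
    rw [ENNReal.ofReal_mul hlog]
    refine mul_le_mul_right ?_ _
    rw [ENNReal.ofReal_add (by positivity) zero_le_one]
    simp
  have hTt : T ≠ ⊤ := (hTle.trans_lt ENNReal.ofReal_lt_top).ne
  rw [expNegE, if_neg hTt, tsub_le_iff_right, ← ENNReal.ofReal_toReal hpt, ← hr,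
    ← ENNReal.ofReal_add hr0 (Real.exp_pos _).le, ENNReal.one_le_ofReal]
  have h4 : T.toReal ≤ -Real.log (1 - r) := ENNReal.toReal_le_of_le_ofReal hlog hTle
  have h5 := (Real.log_le_iff_le_exp (x := 1 - r) (y := -T.toReal) (by linarith)).1 (by linarith)
  linarith
end

section
/- Let f : ℝ/ℤ → [0,1] be an integrable Borel function with f ≢ 0 and f ≢ 1. If the stationary determinantal measure μ_f is ψ-mixing, i.e. ψ_{μ_f}(ℓ) → 0 as ℓ → ∞, then Σ_{n=1}^∞ n·|f̂(n)|² < ∞; since f is real-valued this means f belongs to the Sobolev space H^{1/2}(𝕋), i.e. Σ_{n∈ℤ} |n|·|f̂(n)|² < ∞. -/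
open MeasureTheory Filter Matrix
open scoped ENNReal

open scoped ComplexOrder

open scoped MatrixOrder in
lemma exists_factor {n : Type*} [Fintype n] [DecidableEq n] {M : Matrix n n ℂ} (h : M.PosSemidef) :
    ∃ X : Matrix n n ℂ, M = Xᴴ * X := by

  have h' : 0 ≤ M := Matrix.nonneg_iff_posSemidef.2 h
  exact CStarAlgebra.nonneg_iff_eq_star_mul_self.1 h'

lemma trace_mul_psd {n : Type*} [Fintype n] [DecidableEq n] {A B : Matrix n n ℂ}
    (hA : A.PosSemidef) (hB : B.PosSemidef) : 0 ≤ ((A * B).trace).re := by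
  obtain ⟨X, rfl⟩ := exists_factor hA
  have := (hB.mul_mul_conjTranspose_same X).trace_nonneg
  rw [Matrix.trace_mul_cycle] at this
  exact (Complex.le_def.1 this).1

lemma det_le_exp_trace {n : Type*} [Fintype n] [DecidableEq n] {H : Matrix n n ℂ}
    (h : H.PosSemidef) : H.det.re ≤ Real.exp (H.trace.re - Fintype.card n) := by
  rw [h.isHermitian.det_eq_prod_eigenvalues, h.isHermitian.trace_eq_sum_eigenvalues]
  have e1 : (∏ i, ((h.isHermitian.eigenvalues i : ℝ) : ℂ)).re = ∏ i, h.isHermitian.eigenvalues i := by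
    rw [← Complex.ofReal_prod, Complex.ofReal_re]
  have e2 : (∑ i, ((h.isHermitian.eigenvalues i : ℝ) : ℂ)).re = ∑ i, h.isHermitian.eigenvalues i := by
    rw [← Complex.ofReal_sum, Complex.ofReal_re]
  refine e1.le.trans ?_
  refine le_trans ?_ (Real.exp_le_exp.2 (sub_le_sub_right e2.ge _))
  have : ∑ i, h.isHermitian.eigenvalues i - (Fintype.card n : ℝ)
      = ∑ i, (h.isHermitian.eigenvalues i - 1) := by
    simp [Finset.sum_sub_distrib]
  rw [this, Real.exp_sum]
  refine Finset.prod_le_prod (fun i _ => h.eigenvalues_nonneg i) fun i _ => ?_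
  have := Real.add_one_le_exp (h.isHermitian.eigenvalues i - 1)
  linarith

lemma inv_sub_one_psd_s1 {n : Type*} [Fintype n] [DecidableEq n] {Q : Matrix n n ℂ}
    (h : Q.PosDef) (h1 : (1 - Q).PosSemidef) : (Q⁻¹ - 1).PosSemidef := by
  have hu : IsUnit Q.det := (Matrix.isUnit_iff_isUnit_det _).1 h.isUnit
  have e : Q⁻¹ - 1 = (1 - Q) + (1 - Q)ᴴ * Q⁻¹ * (1 - Q) := by
    rw [h1.isHermitian.eq, Matrix.sub_mul, Matrix.one_mul, Matrix.mul_nonsing_inv _ hu,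
      Matrix.mul_sub, Matrix.sub_mul _ _ Q, Matrix.mul_one, Matrix.one_mul,
      Matrix.nonsing_inv_mul _ hu]
    abel
  rw [e]
  exact h1.add (h.inv.posSemidef.conjTranspose_mul_mul_same _)

lemma trace_ct {m n : Type*} [Fintype n] [Fintype m] (C : Matrix m n ℂ) :
    (Cᴴ * C).trace.re = ∑ i, ∑ j, ‖C i j‖ ^ 2 := by
  rw [Finset.sum_comm]
  simp only [Matrix.trace, Matrix.diag_apply, Matrix.mul_apply, Matrix.conjTranspose_apply,
    Complex.re_sum]
  refine Finset.sum_congr rfl fun j _ => Finset.sum_congr rfl fun i _ => ?_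
  rw [← Complex.normSq_eq_norm_sq, Complex.normSq_apply]
  simp [Complex.mul_re]

lemma det_block_le {m n : Type*} [Fintype m] [DecidableEq m] [Fintype n] [DecidableEq n]
    {P : Matrix m m ℂ} {Q : Matrix n n ℂ} {C : Matrix m n ℂ}
    (hP : P.PosDef) (hP1 : (1 - P).PosSemidef) (hQ : Q.PosDef) (hQ1 : (1 - Q).PosSemidef)
    (hK : (Matrix.fromBlocks P C Cᴴ Q).PosSemidef) :
    (Matrix.fromBlocks P C Cᴴ Q).det.re ≤
      P.det.re * Q.det.re * Real.exp (- ∑ i, ∑ j, ‖C i j‖ ^ 2) := by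
  have : Invertible P := hP.isUnit.invertible
  have hu : IsUnit Q.det := (Matrix.isUnit_iff_isUnit_det _).1 hQ.isUnit
  have hS := (Matrix.PosDef.fromBlocks₁₁ C Q hP).1 hK
  rw [Matrix.det_fromBlocks₁₁, Matrix.invOf_eq_nonsing_inv]
  set M := Cᴴ * P⁻¹ * C with hM
  have hMp : M.PosSemidef := hP.inv.posSemidef.conjTranspose_mul_mul_same C
  obtain ⟨X, hX⟩ := exists_factor hQ.inv.posSemidef
  have hH := hS.mul_mul_conjTranspose_same X
  have h1 := det_le_exp_trace hH
  have htr : (X * (Q - M) * Xᴴ).trace = (Fintype.card n : ℂ) - (Q⁻¹ * M).trace := by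
    rw [Matrix.trace_mul_cycle, ← hX, Matrix.mul_sub, Matrix.nonsing_inv_mul _ hu,
      Matrix.trace_sub, Matrix.trace_one]
  have hdt : (X * (Q - M) * Xᴴ).det * Q.det = (Q - M).det := by
    have : Q⁻¹.det * Q.det = 1 := by
      rw [← Matrix.det_mul, Matrix.nonsing_inv_mul _ hu, Matrix.det_one]
    rw [hX, Matrix.det_mul] at this
    rw [Matrix.det_mul, Matrix.det_mul]
    linear_combination (Q - M).det * this
  have t1 : (M.trace).re ≤ ((Q⁻¹ * M).trace).re := by
    have := trace_mul_psd (inv_sub_one_psd_s1 hQ hQ1) hMp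
    rw [Matrix.sub_mul, Matrix.one_mul, Matrix.trace_sub, Complex.sub_re] at this
    linarith
  have t2 : (Cᴴ * C).trace.re ≤ M.trace.re := by
    have := ((inv_sub_one_psd_s1 hP hP1).conjTranspose_mul_mul_same C).trace_nonneg
    rw [Matrix.mul_sub, Matrix.mul_one, Matrix.sub_mul, Matrix.trace_sub] at this
    have := (Complex.le_def.1 this).1
    simp only [Complex.zero_re, Complex.sub_re] at this
    linarith
  rw [trace_ct] at t2
  have h2 : (X * (Q - M) * Xᴴ).det.re ≤ Real.exp (- ∑ i, ∑ j, ‖C i j‖ ^ 2) := by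
    refine h1.trans (Real.exp_le_exp.2 ?_)
    rw [htr]
    simp only [Complex.sub_re, Complex.natCast_re]
    linarith
  have p1 := Complex.lt_def.1 hP.det_pos
  have p2 := Complex.lt_def.1 hQ.det_pos
  simp only [Complex.zero_re, Complex.zero_im] at p1 p2
  have e : (P.det * (Q - M).det).re = P.det.re * Q.det.re * (X * (Q - M) * Xᴴ).det.re := by
    rw [← hdt]
    simp only [Complex.mul_re, Complex.mul_im, ← p1.2, ← p2.2]
    ring
  rw [e]
  exact mul_le_mul_of_nonneg_left h2 (mul_pos p1.1 p2.1).le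

/-- Toeplitz type matrix. -/
noncomputable def TM (f : AddCircle (1:ℝ) → ℝ) {ι : Type*} (g : ι → ℤ) : Matrix ι ι ℂ :=
  Matrix.of fun i j => fhat f (g i - g j)

lemma vol_eq_haar : (volume : Measure (AddCircle (1:ℝ))) = AddCircle.haarAddCircle := by
  rw [AddCircle.volume_eq_smul_haarAddCircle]; simp

lemma fhat_eq (f : AddCircle (1:ℝ) → ℝ) (n : ℤ) :
    fhat f n = ∫ t, fourier (-n) t * (f t : ℂ) := by
  rw [fhat, fourierCoeff, vol_eq_haar]; rfl

lemma fhat_neg (f : AddCircle (1:ℝ) → ℝ) (n : ℤ) : fhat f (-n) = star (fhat f n) := by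
  rw [fhat_eq, fhat_eq, Complex.star_def, ← integral_conj]
  congr 1; ext t
  rw [map_mul, ← fourier_neg, Complex.conj_ofReal]

lemma TM_herm (f : AddCircle (1:ℝ) → ℝ) {ι : Type*} (g : ι → ℤ) : (TM f g).IsHermitian := by
  ext i j
  rw [Matrix.conjTranspose_apply]
  simp only [TM, Matrix.of_apply]
  rw [← fhat_neg, neg_sub]

lemma TM_quad (f : AddCircle (1:ℝ) → ℝ) (hf : Integrable f) {ι : Type*} [Fintype ι] (g : ι → ℤ)
    (x : ι → ℂ) : star x ⬝ᵥ ((TM f g) *ᵥ x) =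
      ((∫ t, f t * ‖∑ j, x j * fourier (g j) t‖ ^ 2 : ℝ) : ℂ) := by
  have hint : ∀ n : ℤ, Integrable (fun t : AddCircle (1:ℝ) => fourier n t * (f t : ℂ)) := by
    intro n
    have h2 : Integrable (fun t => (f t : ℂ)) (AddCircle.haarAddCircle (T := 1)) := by
      rw [← vol_eq_haar]; exact hf.ofReal
    have := h2.fourier_smul n
    rw [← vol_eq_haar] at this
    exact this
  rw [← integral_complex_ofReal]
  simp only [dotProduct, Matrix.mulVec, Finset.mul_sum, TM, Matrix.of_apply, fhat_eq]
  have e : ∀ t : AddCircle (1:ℝ), (((f t * ‖∑ j, x j * fourier (g j) t‖ ^ 2 : ℝ)) : ℂ)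
      = ∑ i, ∑ j, (star x i * x j) * (fourier (-(g i - g j)) t * (f t : ℂ)) := by
    intro t
    rw [Complex.ofReal_mul, ← Complex.normSq_eq_norm_sq, Complex.normSq_eq_conj_mul_self,
      map_sum, Finset.sum_mul_sum, Finset.mul_sum]
    refine Finset.sum_congr rfl fun i _ => ?_
    rw [Finset.mul_sum]
    refine Finset.sum_congr rfl fun j _ => ?_
    rw [show -(g i - g j) = -(g i) + g j by ring, fourier_add, fourier_neg, map_mul]
    simp only [Pi.star_apply, Complex.star_def]
    ring
  simp_rw [e]
  rw [integral_finsetSum _ fun i _ => integrable_finsetSum _ fun j _ => (hint _).const_mul _]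
  refine Finset.sum_congr rfl fun i _ => ?_
  rw [integral_finsetSum _ fun j _ => (hint _).const_mul _]
  refine Finset.sum_congr rfl fun j _ => ?_
  rw [integral_const_mul]
  ring

lemma TM_psd (f : AddCircle (1:ℝ) → ℝ) (hf : Integrable f) (h0 : ∀ t, 0 ≤ f t)
    {ι : Type*} [Fintype ι] (g : ι → ℤ) : (TM f g).PosSemidef := by
  refine .of_dotProduct_mulVec_nonneg (TM_herm f g) fun x => ?_
  rw [TM_quad f hf]
  rw [Complex.zero_le_real]
  exact integral_nonneg fun t => mul_nonneg (h0 t) (by positivity)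

lemma fhat_one_sub (f : AddCircle (1:ℝ) → ℝ) (hf : Integrable f) (n : ℤ) :
    fhat (fun t => 1 - f t) n = (if n = 0 then 1 else 0) - fhat f n := by
  have h2 : Integrable (fun t => (f t : ℂ)) (AddCircle.haarAddCircle (T := 1)) := by
    rw [← vol_eq_haar]; exact hf.ofReal
  have h3 := h2.fourier_smul (-n)
  have h1 : ∫ t : AddCircle (1:ℝ), fourier (-n) t ∂AddCircle.haarAddCircle = if n = 0 then (1:ℂ) else 0 := by
    split_ifs with h
    · subst h; simp [fourier_zero, -fourier_apply]
    · exact integral_eq_zero_of_add_right_eq_neg (fourier_add_half_inv_index (neg_ne_zero.2 h) one_pos)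
  unfold fhat fourierCoeff
  rw [← h1, ← integral_sub _ h3]
  · congr 1; ext t; simp only [smul_eq_mul]; push_cast; ring
  · exact (map_continuous (fourier (-n))).integrable_of_hasCompactSupport
      (HasCompactSupport.of_compactSpace _)

lemma TM_one_sub (f : AddCircle (1:ℝ) → ℝ) (hf : Integrable f)
    {ι : Type*} [Fintype ι] [DecidableEq ι] (g : ι → ℤ) (hg : Function.Injective g) :
    1 - TM f g = TM (fun t => 1 - f t) g := by
  ext i j
  simp only [TM, Matrix.sub_apply, Matrix.of_apply, fhat_one_sub f hf, Matrix.one_apply,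
    sub_eq_zero, hg.eq_iff]

lemma TM_psd' (f : AddCircle (1:ℝ) → ℝ) (hf : Integrable f) (h1 : ∀ t, f t ≤ 1)
    {ι : Type*} [Fintype ι] [DecidableEq ι] (g : ι → ℤ) (hg : Function.Injective g) :
    (1 - TM f g).PosSemidef := by
  rw [TM_one_sub f hf g hg]
  exact TM_psd _ ((integrable_const 1).sub hf) (fun t => sub_nonneg.2 (h1 t)) g

lemma TM_pd (f : AddCircle (1:ℝ) → ℝ) (hf : Integrable f) (h0 : ∀ t, 0 ≤ f t)
    (hne0 : ¬ (∀ᵐ t : AddCircle (1:ℝ), f t = 0)) (N : ℕ) :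
    (TM f (fun i : Fin N => ((i : ℕ) : ℤ))).PosDef := by
  refine .of_dotProduct_mulVec_pos (TM_herm f _) fun x hx => ?_
  rw [TM_quad f hf, Complex.zero_lt_real]
  have hnn : ∀ t, 0 ≤ f t * ‖∑ j : Fin N, x j * fourier ((j : ℕ) : ℤ) t‖ ^ 2 :=
    fun t => mul_nonneg (h0 t) (by positivity)
  refine lt_of_le_of_ne (integral_nonneg hnn) fun hz => hne0 ?_
  have hI : Integrable fun t => f t * ‖∑ j : Fin N, x j * fourier ((j : ℕ) : ℤ) t‖ ^ 2 := by
    refine hf.mul_bdd (c := (∑ j : Fin N, ‖x j‖) ^ 2) ?_ (ae_of_all _ fun t => ?_)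
    · refine Continuous.aestronglyMeasurable ?_
      fun_prop
    · rw [norm_pow, norm_norm]
      gcongr
      refine (norm_sum_le _ _).trans (Finset.sum_le_sum fun j _ => ?_)
      rw [norm_mul, fourier_apply, Circle.norm_coe, mul_one]
  have hae := (integral_eq_zero_iff_of_nonneg hnn hI).1 hz.symm
  set p : Polynomial ℂ := ∑ j : Fin N, Polynomial.monomial (j : ℕ) (x j) with hp
  have hp0 : p ≠ 0 := by
    intro h
    apply hx
    ext j
    have : p.coeff (j : ℕ) = x j := by
      rw [hp, Polynomial.finsetSum_coeff]
      simp only [Polynomial.coeff_monomial, Fin.val_inj]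
      simp
    rw [← this, h]; simp
  have hev : ∀ t : AddCircle (1:ℝ), ∑ j : Fin N, x j * fourier ((j : ℕ) : ℤ) t
      = p.eval (fourier 1 t) := by
    intro t
    rw [hp, Polynomial.eval_finsetSum]
    refine Finset.sum_congr rfl fun j _ => ?_
    rw [Polynomial.eval_monomial]
    congr 1
    rw [fourier_one, fourier_apply, AddCircle.toCircle_zsmul]
    simp
  have hfin : {t : AddCircle (1:ℝ) | p.eval (fourier 1 t) = 0}.Finite := by
    have := (p.roots.toFinset.finite_toSet).preimage
      (f := fun t : AddCircle (1:ℝ) => (fourier 1 t : ℂ)) (Function.Injective.injOn (by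
        intro a b hab
        simp only [fourier_one] at hab
        exact AddCircle.injective_toCircle one_ne_zero (Subtype.ext hab)))
    refine this.subset fun t ht => ?_
    simpa [hp0] using ht
  have hnull : ∀ᵐ t : AddCircle (1:ℝ), p.eval (fourier 1 t) ≠ 0 := by
    rw [ae_iff]
    simp only [ne_eq, not_not]
    have : NullSingletonClass (volume : Measure (AddCircle (1:ℝ))) := by
      have : Nontrivial (AddCircle (1:ℝ)) := by
        refine ⟨((1 / 2 : ℝ) : AddCircle (1:ℝ)), 0, fun h => ?_⟩
        obtain ⟨n, hn⟩ := AddCircle.coe_eq_zero_iff _ |>.1 h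
        rw [zsmul_eq_mul, mul_one] at hn
        have h2 : ((2 * n : ℤ) : ℝ) = ((1 : ℤ) : ℝ) := by push_cast; rw [hn]; norm_num
        have := Int.cast_injective h2
        omega
      have : (nhdsWithin (0 : AddCircle (1:ℝ)) {0}ᶜ).NeBot :=
        ConnectedSpace.neBot_nhdsWithin_compl_of_nontrivial_of_t1space _
      rw [vol_eq_haar]
      exact Measure.IsAddHaarMeasure.nullSingletonClass _
    exact hfin.measure_zero _
  filter_upwards [hae, hnull] with t ht1 ht2
  have : f t * ‖∑ j : Fin N, x j * fourier ((j : ℕ) : ℤ) t‖ ^ 2 = 0 := ht1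
  rw [hev] at this
  simpa [ht2, -fourier_apply] using this

lemma det_TM {f : AddCircle (1:ℝ) → ℝ} {μ : Measure (ℤ → Bool)} (hdet : IsDeterminantal f μ)
    {ι : Type*} [Fintype ι] [DecidableEq ι] (g : ι → ℤ) (hg : Function.Injective g) :
    ((μ {x | ∀ i, x (g i) = true}).toReal : ℂ) = (TM f g).det := by
  have h := hdet (Finset.univ.image g)
  have e1 : {x : ℤ → Bool | ∀ n ∈ Finset.univ.image g, x n = true} = {x | ∀ i, x (g i) = true} := by
    ext x; simp
  rw [e1] at h
  rw [h]
  let e : ι ≃ (Finset.univ.image g : Finset ℤ) :=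
    Equiv.ofBijective (fun i => ⟨g i, by simp⟩) ⟨fun a b hab => hg (congrArg Subtype.val hab), by
      rintro ⟨n, hn⟩
      obtain ⟨i, -, rfl⟩ := Finset.mem_image.1 hn
      exact ⟨i, rfl⟩⟩
  rw [← Matrix.det_submatrix_equiv_self e]
  rfl

lemma meas_coord {S : Set ℤ} {ι : Type*} [Fintype ι] (g : ι → ℤ) (hg : ∀ i, g i ∈ S) :
    MeasurableSet[coordSigma S] {x : ℤ → Bool | ∀ i, x (g i) = true} := by
  refine ⟨{y | ∀ i, y ⟨g i, hg i⟩ = true}, ?_, rfl⟩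
  rw [Set.ofPred_forall]
  refine MeasurableSet.iInter fun i => ?_
  have hm : Measurable (fun y : S → Bool => y ⟨g i, hg i⟩) := measurable_pi_apply _
  exact hm (measurableSet_singleton true)

lemma key_bound (f : AddCircle (1:ℝ) → ℝ) 
    (h0 : ∀ t, 0 ≤ f t) (h1 : ∀ t, f t ≤ 1) (hint : Integrable f)
    (hne0 : ¬ (∀ᵐ t : AddCircle (1:ℝ), f t = 0))
    (μ : Measure (ℤ → Bool)) [IsProbabilityMeasure μ] (hdet : IsDeterminantal f μ)
    (ℓ : ℕ) (hℓ : 1 ≤ ℓ) (hpsi : psi μ ℓ ≤ ENNReal.ofReal (1 / 2)) (N : ℕ) :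
    ∑ i ∈ Finset.range N, ∑ j ∈ Finset.range N, ‖fhat f ((ℓ + (i + j) : ℕ) : ℤ)‖ ^ 2 ≤ Real.log 2 := by
  let g0 : Fin N → ℤ := fun i => ((i : ℕ) : ℤ)
  let gA : Fin N → ℤ := fun i => ((i : ℕ) : ℤ) - N + 1
  let gB : Fin N → ℤ := fun i => ((i : ℕ) : ℤ) + ℓ
  let g : Fin N ⊕ Fin N → ℤ := Sum.elim gA gB
  have i0 : Function.Injective g0 := fun a b h => by simp only [g0] at h; omega
  have iA : Function.Injective gA := fun a b h => by simp only [gA] at h; omega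
  have iB : Function.Injective gB := fun a b h => by simp only [gB] at h; omega
  have iG : Function.Injective g := by
    refine iA.sumElim iB fun a b h => ?_
    simp only [gA, gB] at h
    omega
  have eA : TM f gA = TM f g0 := by
    ext i j; simp only [TM, Matrix.of_apply, gA, g0]; congr 1; ring
  have eB : TM f gB = TM f g0 := by
    ext i j; simp only [TM, Matrix.of_apply, gB, g0]; congr 1; ring
  have hPd := TM_pd f hint h0 hne0 N
  have hPs := TM_psd' f hint h1 g0 i0
  let C : Matrix (Fin N) (Fin N) ℂ := Matrix.of fun i j => fhat f (gA i - gB j)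
  have eK : TM f g = Matrix.fromBlocks (TM f g0) C Cᴴ (TM f g0) := by
    ext i j
    rcases i with i | i <;> rcases j with j | j
    · exact congrFun (congrFun eA i) j
    · rfl
    · rw [Matrix.fromBlocks_apply₂₁, Matrix.conjTranspose_apply]
      simp only [TM, C, Matrix.of_apply, g, Sum.elim_inl, Sum.elim_inr]
      rw [← fhat_neg, neg_sub]
    · exact congrFun (congrFun eB i) j
  have hK := TM_psd f hint h0 g
  have hb := det_block_le (C := C) hPd hPs hPd hPs (by rw [← eK]; exact hK)
  rw [← eK] at hb
  have dA := det_TM hdet gA iA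
  have dB := det_TM hdet gB iB
  have dG := det_TM hdet g iG
  rw [eA] at dA
  rw [eB] at dB
  set A := {x : ℤ → Bool | ∀ i, x (gA i) = true} with hA
  set B := {x : ℤ → Bool | ∀ i, x (gB i) = true} with hB
  have hAB : {x : ℤ → Bool | ∀ i, x (g i) = true} = A ∩ B := by
    ext x; simp [g, hA, hB]
  rw [hAB] at dG
  have rA : (μ A).toReal = (TM f g0).det.re := by rw [← dA, Complex.ofReal_re]
  have rB : (μ B).toReal = (TM f g0).det.re := by rw [← dB, Complex.ofReal_re]
  have rG : (μ (A ∩ B)).toReal = (TM f g).det.re := by rw [← dG, Complex.ofReal_re]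
  have dpos : 0 < (TM f g0).det.re := (Complex.lt_def.1 hPd.det_pos).1
  have pA : 0 < μ A := (ENNReal.toReal_pos_iff.1 (rA ▸ dpos)).1
  have pB : 0 < μ B := (ENNReal.toReal_pos_iff.1 (rB ▸ dpos)).1
  have mA : MeasurableSet[coordSigma {n : ℤ | n ≤ 0}] A :=
    meas_coord gA fun i => by simp only [gA, Set.mem_ofPred_eq]; omega
  have mB : MeasurableSet[coordSigma {n : ℤ | (ℓ : ℤ) ≤ n}] B :=
    meas_coord gB fun i => by simp only [gB, Set.mem_ofPred_eq]; omega
  have hle : ENNReal.ofReal |(μ (A ∩ B)).toReal / ((μ A).toReal * (μ B).toReal) - 1|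
      ≤ psi μ ℓ := by
    unfold psi
    exact le_iSup_of_le A <| le_iSup_of_le mA <| le_iSup_of_le pA <| le_iSup_of_le B <|
      le_iSup_of_le mB <| le_iSup_of_le pB le_rfl
  have h2 := (ENNReal.ofReal_le_ofReal_iff (by norm_num)).1 (hle.trans hpsi)
  rw [rA, rB, rG] at h2
  have h3 := (abs_le.1 h2).1
  have h4 : (TM f g).det.re / ((TM f g0).det.re * (TM f g0).det.re) ≤
      Real.exp (- ∑ i, ∑ j, ‖C i j‖ ^ 2) := by
    rw [div_le_iff₀ (mul_pos dpos dpos)]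
    linarith [hb]
  have h5 : (1/2 : ℝ) ≤ Real.exp (- ∑ i, ∑ j, ‖C i j‖ ^ 2) := by linarith
  have h6 : ∑ i, ∑ j, ‖C i j‖ ^ 2 ≤ Real.log 2 := by
    have := Real.log_le_log (by norm_num) h5
    rw [Real.log_exp, one_div, Real.log_inv] at this
    linarith
  refine le_trans (le_of_eq ?_) h6
  rw [← Equiv.sum_comp Fin.revPerm, ← Fin.sum_univ_eq_sum_range
    (fun i => ∑ j ∈ Finset.range N, ‖fhat f ((ℓ + (i + j) : ℕ) : ℤ)‖ ^ 2)]
  refine Finset.sum_congr rfl fun i _ => ?_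
  rw [← Fin.sum_univ_eq_sum_range (fun j => ‖fhat f ((ℓ + (i + j) : ℕ) : ℤ)‖ ^ 2)]
  refine Finset.sum_congr rfl fun j _ => ?_
  have : gA (Fin.revPerm i) - gB j = - ((ℓ + (i + j) : ℕ) : ℤ) := by
    simp only [gA, gB, Fin.revPerm_apply, Fin.val_rev]
    omega
  simp only [C, Matrix.of_apply]
  rw [this, fhat_neg, norm_star]

lemma sum_diag_le (a : ℕ → ℝ) (ha : ∀ n, 0 ≤ a n) (N : ℕ) :
    ∑ k ∈ Finset.range N, ((k : ℝ) + 1) * a k ≤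
      ∑ i ∈ Finset.range N, ∑ j ∈ Finset.range N, a (i + j) := by
  have : ∀ k : ℕ, ((k : ℝ) + 1) * a k = ∑ p ∈ Finset.HasAntidiagonal.antidiagonal k, a (p.1 + p.2) := by
    intro k
    rw [Finset.sum_congr rfl (fun p hp => by rw [Finset.HasAntidiagonal.mem_antidiagonal.1 hp])]
    simp
  simp_rw [this]
  rw [← Finset.sum_product', ← Finset.sum_biUnion]
  · refine Finset.sum_le_sum_of_subset_of_nonneg ?_ fun _ _ _ => ha _
    intro p hp
    simp only [Finset.mem_biUnion, Finset.mem_range, Finset.HasAntidiagonal.mem_antidiagonal,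
      Finset.mem_product] at hp ⊢
    obtain ⟨k, hk, hp⟩ := hp
    omega
  · intro i _ j _ hij
    refine Finset.disjoint_left.2 fun p hp hq => hij ?_
    rw [Finset.HasAntidiagonal.mem_antidiagonal] at hp hq
    omega

/-- If the stationary determinantal measure `μ_f` is ψ-mixing, then
`Σ_{n=1}^∞ n|f̂(n)|² < ∞`, and, `f` being real-valued, `f ∈ H^{1/2}(𝕋)`,
i.e. `Σ_{n∈ℤ} |n||f̂(n)|² < ∞`. -/
theorem psi_mixing_implies_sobolev
    (f : AddCircle (1:ℝ) → ℝ) (hmeas : Measurable f)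
    (h0 : ∀ t, 0 ≤ f t) (h1 : ∀ t, f t ≤ 1) (hint : Integrable f)
    (hne0 : ¬ (∀ᵐ t : AddCircle (1:ℝ), f t = 0))
    (hne1 : ¬ (∀ᵐ t : AddCircle (1:ℝ), f t = 1))
    (μ : Measure (ℤ → Bool)) [IsProbabilityMeasure μ] (hdet : IsDeterminantal f μ)
    (hmix : Tendsto (fun ℓ : ℕ => psi μ ℓ) atTop (nhds 0)) :
    Summable (fun n : ℕ => (n : ℝ) * ‖fhat f n‖ ^ 2) ∧
      Summable (fun n : ℤ => |(n : ℝ)| * ‖fhat f n‖ ^ 2) := by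
  have hev : ∀ᶠ ℓ : ℕ in atTop, psi μ ℓ ≤ ENNReal.ofReal (1 / 2) :=
    hmix.eventually_le_const (by simp)
  obtain ⟨ℓ, hpsi, hℓ⟩ := (hev.and (eventually_ge_atTop 1)).exists
  have hb : ∀ N, ∑ k ∈ Finset.range N, ((k : ℝ) + 1) * ‖fhat f ((ℓ + k : ℕ) : ℤ)‖ ^ 2
      ≤ Real.log 2 := fun N =>
    (sum_diag_le (fun k => ‖fhat f ((ℓ + k : ℕ) : ℤ)‖ ^ 2) (fun _ => by positivity) N).trans
      (key_bound f h0 h1 hint hne0 μ hdet ℓ hℓ hpsi N)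
  have hs : Summable fun k : ℕ => ((k : ℝ) + 1) * ‖fhat f ((ℓ + k : ℕ) : ℤ)‖ ^ 2 :=
    summable_of_sum_range_le (fun _ => by positivity) hb
  have hN : Summable (fun n : ℕ => (n : ℝ) * ‖fhat f n‖ ^ 2) := by
    rw [← summable_nat_add_iff ℓ]
    refine (hs.mul_left ((ℓ : ℝ) + 1)).of_nonneg_of_le (fun _ => by positivity) fun k => ?_
    rw [add_comm ℓ k, ← mul_assoc]
    gcongr
    push_cast
    nlinarith [(Nat.cast_nonneg ℓ : (0:ℝ) ≤ ℓ), (Nat.cast_nonneg k : (0:ℝ) ≤ k),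
      mul_nonneg (Nat.cast_nonneg ℓ : (0:ℝ) ≤ ℓ) (Nat.cast_nonneg k : (0:ℝ) ≤ k)]
  refine ⟨hN, Summable.of_nat_of_neg ?_ ?_⟩
  · simpa using hN
  · simpa [fhat_neg] using hN
end

section
/- Let f : ℝ/ℤ → [0,1] be a Borel function such that either f ≤ 1/2 almost everywhere or f ≥ 1/2 almost everywhere, and let q ≥ 2 be an integer. Then the sequence N ↦ S_N^{(q)}(f) is submultiplicative: for all integers M, N ≥ 1, S_{M+N}^{(q)}(f) ≤ S_M^{(q)}(f) · S_N^{(q)}(f). -/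
open MeasureTheory Matrix Filter

/-- A boolean seen as the complex number `0` or `1`. -/
def bc (b : Bool) : ℂ := if b then 1 else 0

/-- The `N×N` Toeplitz matrix `T_N(f) = (f̂(i-j))_{1 ≤ i,j ≤ N}`. -/
noncomputable def Tmat (f : AddCircle (1:ℝ) → ℝ) (N : ℕ) : Matrix (Fin N) (Fin N) ℂ :=
  Matrix.of fun i j => fhat f (((i : ℕ) : ℤ) - ((j : ℕ) : ℤ))

/-- The cylinder weight `μ_f^+([ε]) = det(D_N(2ε-1)·T_N(f) + D_N(1-ε))`
(a real number, taken as the real part of the complex determinant). -/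
noncomputable def cylWeight (f : AddCircle (1:ℝ) → ℝ) {N : ℕ} (ε : Fin N → Bool) : ℝ :=
  ((Matrix.diagonal (fun i => 2 * bc (ε i) - 1) * Tmat f N +
      Matrix.diagonal (fun i => 1 - bc (ε i))).det).re

/-- `S_N^{(q)}(f) = Σ_{ε ∈ {0,1}^N} det(D_N(2ε-1)·T_N(f) + D_N(1-ε))^q`. -/
noncomputable def Sq (f : AddCircle (1:ℝ) → ℝ) (q N : ℕ) : ℝ :=
  ∑ ε : Fin N → Bool, (cylWeight f ε) ^ q

open scoped ComplexOrder

lemma aux_expand {n : Type*} [Fintype n] [DecidableEq n] (d : n → ℂ) (A : Matrix n n ℂ) :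
    (1 + Matrix.diagonal d * A).det =
      ∑ S : Finset n, (∏ i ∈ S, d i) * (A.submatrix (Subtype.val : {i // i ∈ S} → n) Subtype.val).det := by
  rw [add_comm]
  have h := (Matrix.detRowAlternating (R := ℂ) (n := n)).map_add_univ
    (Matrix.diagonal d * A) (1 : Matrix n n ℂ)
  refine h.trans (Finset.sum_congr rfl fun S _ => ?_)
  let P : n → n → ℂ := fun i j => if i ∈ S then A i j else (1 : Matrix n n ℂ) i j
  have h2 : (S.piecewise (Matrix.diagonal d * A : Matrix n n ℂ) (1 : Matrix n n ℂ) : n → n → ℂ)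
      = S.piecewise (fun i => d i • P i) P := by
    funext i j
    by_cases hi : i ∈ S
    · simp only [Finset.piecewise, if_pos hi]
      simp [P, hi, Matrix.diagonal_mul]
    · simp only [Finset.piecewise, if_neg hi]
      simp [P, hi]
  refine (congrArg _ h2).trans ?_
  rw [← AlternatingMap.coe_multilinearMap, MultilinearMap.map_piecewise_smul, smul_eq_mul]
  congr 1
  change Matrix.det (Matrix.of P) = _
  rw [Matrix.twoBlockTriangular_det _ (fun i => i ∈ S)]
  · have e1 : (Matrix.toSquareBlockProp (Matrix.of P) fun i => ¬ i ∈ S) = 1 := by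
      ext i j
      have := i.2
      simp [Matrix.toSquareBlockProp_def, P, this, Matrix.one_apply, Subtype.ext_iff]
    have e2 : (Matrix.toSquareBlockProp (Matrix.of P) fun i => i ∈ S)
        = A.submatrix Subtype.val Subtype.val := by
      ext i j
      simp [Matrix.toSquareBlockProp_def, P]
    rw [e1, e2, Matrix.det_one, mul_one]
    congr!
  · intro i hi j hj
    have : i ≠ j := by rintro rfl; exact hi hj
    simp [P, hi, this]

lemma aux_one_le {n : Type*} [Fintype n] [DecidableEq n] {P : Matrix n n ℂ} (hP : P.PosSemidef) :
    1 ≤ (1 + P).det := by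
  have h := aux_expand (fun _ => (1:ℂ)) P
  rw [show Matrix.diagonal (fun _ : n => (1:ℂ)) = 1 from Matrix.diagonal_one, one_mul] at h
  rw [h]
  have := Finset.single_le_sum (f := fun S : Finset n => (∏ i ∈ S, (1:ℂ)) *
    (P.submatrix (Subtype.val : {i // i ∈ S} → n) Subtype.val).det) (s := Finset.univ)
    (fun S _ => by
      simp only [Finset.prod_const_one, one_mul]
      exact (hP.submatrix _).det_nonneg) (Finset.mem_univ ∅)
  refine le_trans (le_of_eq ?_) this
  simp [Matrix.det_isEmpty]

lemma aux_det_mono {n : Type*} [Fintype n] [DecidableEq n] {C X : Matrix n n ℂ}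
    (hC : C.PosSemidef) (hX : X.PosSemidef) : C.det ≤ (C + X).det := by
  by_cases h : C.det = 0
  · rw [h]; exact (hC.add hX).det_nonneg
  have hCd : C.PosDef := hC.posDef_iff_det_ne_zero.2 h
  obtain ⟨Y, rfl⟩ : ∃ Y : Matrix n n ℂ, X = Yᴴ * Y := by
    open scoped MatrixOrder in
    exact CStarAlgebra.nonneg_iff_eq_star_mul_self.1 (Matrix.nonneg_iff_posSemidef.2 hX)
  rw [Matrix.det_add_mul _ _ (isUnit_iff_ne_zero.2 h)]
  have h1 := aux_one_le (hCd.inv.posSemidef.mul_mul_conjTranspose_same Y)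
  exact le_mul_of_one_le_right hC.det_nonneg h1

lemma aux_fischer {m n : Type*} [Fintype m] [DecidableEq m] [Fintype n] [DecidableEq n]
    {A : Matrix m m ℂ} {B : Matrix m n ℂ} {D : Matrix n n ℂ}
    (h : (Matrix.fromBlocks A B Bᴴ D).PosSemidef) :
    (Matrix.fromBlocks A B Bᴴ D).det ≤ A.det * D.det := by
  have hA : A.PosSemidef := h.submatrix Sum.inl
  have hD : D.PosSemidef := h.submatrix Sum.inr
  by_cases h0 : (Matrix.fromBlocks A B Bᴴ D).det = 0
  · rw [h0]; exact mul_nonneg hA.det_nonneg hD.det_nonneg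
  have hp := h.posDef_iff_det_ne_zero.2 h0
  have hAp : A.PosDef := hp.submatrix (e := Sum.inl) Sum.inl_injective
  have hu := hAp.isUnit
  let _ : Invertible A := hu.invertible
  rw [Matrix.det_fromBlocks₁₁]
  refine mul_le_mul_of_nonneg_left ?_ hA.det_nonneg
  have hS := (Matrix.PosDef.fromBlocks₁₁ B D hAp).1 h
  have hX : (Bᴴ * A⁻¹ * B).PosSemidef := hAp.inv.posSemidef.conjTranspose_mul_mul_same B
  have := aux_det_mono hS hX
  simpa [Matrix.invOf_eq_nonsing_inv] using this

lemma aux_fischer' {n : Type*} [Fintype n] [DecidableEq n] (p : n → Prop) [DecidablePred p]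
    {A : Matrix n n ℂ} (h : A.PosSemidef) :
    A.det ≤ (Matrix.of fun i j => if (p i ↔ p j) then A i j else 0 : Matrix n n ℂ).det := by
  set B := (Matrix.of fun i j => if (p i ↔ p j) then A i j else 0 : Matrix n n ℂ) with hB
  let e := Equiv.sumCompl p
  have h' := h.submatrix e
  rw [← Matrix.det_submatrix_equiv_self e A, ← Matrix.det_submatrix_equiv_self e B]
  have e1 : A.submatrix e e = Matrix.fromBlocks
      (A.submatrix (Subtype.val : {i // p i} → n) Subtype.val)
      (A.submatrix (Subtype.val : {i // p i} → n) (Subtype.val : {i // ¬ p i} → n))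
      (A.submatrix (Subtype.val : {i // p i} → n) (Subtype.val : {i // ¬ p i} → n))ᴴ
      (A.submatrix (Subtype.val : {i // ¬ p i} → n) (Subtype.val : {i // ¬ p i} → n)) := by
    ext (i | i) (j | j) <;> simp [e]
    exact (h.isHermitian.apply _ _).symm
  have e2 : B.submatrix e e = Matrix.fromBlocks
      (A.submatrix (Subtype.val : {i // p i} → n) Subtype.val) 0 0
      (A.submatrix (Subtype.val : {i // ¬ p i} → n) (Subtype.val : {i // ¬ p i} → n)) := by
    ext (i | i) (j | j) <;> simp [e, hB, i.2, j.2]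
  rw [e1] at h' ⊢
  rw [e2, Matrix.det_fromBlocks_zero₂₁]
  exact aux_fischer h'

/-- sign of a boolean -/
def sgb (b : Bool) : ℝ := if b then 1 else -1

noncomputable def WW {n : Type*} [Fintype n] [DecidableEq n] (A : Matrix n n ℂ) (s : n → Bool) : ℝ :=
  ((1 + Matrix.diagonal (fun i => ((sgb (s i) : ℝ) : ℂ)) * A).det).re

noncomputable def VV {n : Type*} [Fintype n] [DecidableEq n] (q : ℕ) (A : Matrix n n ℂ) : ℝ :=
  ∑ s : n → Bool, WW A s ^ q

lemma WW_expand {n : Type*} [Fintype n] [DecidableEq n] (A : Matrix n n ℂ) (s : n → Bool) :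
    WW A s = ∑ S : Finset n,
      (A.submatrix (Subtype.val : {i // i ∈ S} → n) Subtype.val).det.re * ∏ i ∈ S, sgb (s i) := by
  rw [WW, aux_expand, Complex.re_sum]
  refine Finset.sum_congr rfl fun S _ => ?_
  rw [← Complex.ofReal_prod, Complex.re_ofReal_mul, mul_comm]

lemma WW_im {n : Type*} [Fintype n] [DecidableEq n] {A : Matrix n n ℂ} (hA : A.PosSemidef) (s : n → Bool) :
    ((1 + Matrix.diagonal (fun i => ((sgb (s i) : ℝ) : ℂ)) * A).det).im = 0 := by
  rw [aux_expand, Complex.im_sum]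
  refine Finset.sum_eq_zero fun S _ => ?_
  rw [← Complex.ofReal_prod, Complex.im_ofReal_mul]
  have := (Complex.le_def.1 (hA.submatrix (Subtype.val : {i // i ∈ S} → n)).det_nonneg).2
  rw [← this]; simp

lemma aux_char {n : Type*} [Fintype n] [DecidableEq n] (q : ℕ) (S : Fin q → Finset n) :
    0 ≤ ∑ s : n → Bool, ∏ k, ∏ i ∈ S k, sgb (s i) := by
  have : ∀ s : n → Bool, ∏ k, ∏ i ∈ S k, sgb (s i) =
      ∏ i, ∏ k, (if i ∈ S k then sgb (s i) else 1) := by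
    intro s
    rw [Finset.prod_comm]
    refine Finset.prod_congr rfl fun k _ => ?_
    rw [Finset.prod_ite_mem]; simp
  simp_rw [this]
  rw [← Fintype.prod_sum (fun (i : n) (b : Bool) => ∏ k, (if i ∈ S k then sgb b else 1))]
  refine Finset.prod_nonneg fun i _ => ?_
  rw [Fintype.sum_bool]
  simp only [sgb, if_true, ite_self, Finset.prod_const_one, Bool.false_eq_true, if_false]
  rw [Finset.prod_ite]
  simp only [Finset.prod_const, one_pow, mul_one]
  rcases neg_one_pow_eq_or ℝ (Finset.card (Finset.univ.filter fun k => i ∈ S k)) with h | h <;> rw [h] <;> norm_num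

lemma aux_moment {n : Type*} [Fintype n] [DecidableEq n] (q : ℕ) (c d : Finset n → ℝ)
    (hc : ∀ S, 0 ≤ c S) (hcd : ∀ S, c S ≤ d S) :
    ∑ s : n → Bool, (∑ S, c S * ∏ i ∈ S, sgb (s i)) ^ q ≤
    ∑ s : n → Bool, (∑ S, d S * ∏ i ∈ S, sgb (s i)) ^ q := by
  have key : ∀ c : Finset n → ℝ, ∑ s : n → Bool, (∑ S, c S * ∏ i ∈ S, sgb (s i)) ^ q =
      ∑ S : Fin q → Finset n, (∏ k, c (S k)) * ∑ s : n → Bool, ∏ k, ∏ i ∈ S k, sgb (s i) := by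
    intro c
    simp_rw [Fintype.sum_pow, Finset.prod_mul_distrib]
    rw [Finset.sum_comm]
    simp_rw [Finset.mul_sum]
  rw [key, key]
  refine Finset.sum_le_sum fun S _ => mul_le_mul_of_nonneg_right ?_ (aux_char q S)
  exact Finset.prod_le_prod (fun k _ => hc _) (fun k _ => hcd _)

lemma VV_block {m n : Type*} [Fintype m] [DecidableEq m] [Fintype n] [DecidableEq n] (q : ℕ)
    {A : Matrix (m ⊕ n) (m ⊕ n) ℂ} (hA : A.PosSemidef) :
    VV q A ≤ VV q (A.submatrix Sum.inl Sum.inl) * VV q (A.submatrix Sum.inr Sum.inr) := by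
  set B : Matrix (m ⊕ n) (m ⊕ n) ℂ :=
    Matrix.of fun i j => if (i.isLeft = true ↔ j.isLeft = true) then A i j else 0 with hB
  have h1 : VV q A ≤ VV q B := by
    simp only [VV, WW_expand]
    refine aux_moment q _ _ (fun S => ?_) (fun S => ?_)
    · exact (Complex.le_def.1 (hA.submatrix (Subtype.val : {i // i ∈ S} → m ⊕ n)).det_nonneg).1
    · have := aux_fischer' (fun i : {i // i ∈ S} => i.1.isLeft = true)
        (hA.submatrix (Subtype.val : {i // i ∈ S} → m ⊕ n))
      exact (Complex.le_def.1 this).1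
  refine h1.trans (le_of_eq ?_)
  have hW : ∀ s : m ⊕ n → Bool, WW B s =
      WW (A.submatrix Sum.inl Sum.inl) (s ∘ Sum.inl) * WW (A.submatrix Sum.inr Sum.inr) (s ∘ Sum.inr) := by
    intro s
    have e : 1 + Matrix.diagonal (fun i => ((sgb (s i) : ℝ) : ℂ)) * B =
        Matrix.fromBlocks
          (1 + Matrix.diagonal (fun i => ((sgb ((s ∘ Sum.inl) i) : ℝ) : ℂ)) * A.submatrix Sum.inl Sum.inl) 0 0
          (1 + Matrix.diagonal (fun i => ((sgb ((s ∘ Sum.inr) i) : ℝ) : ℂ)) * A.submatrix Sum.inr Sum.inr) := by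
      ext (i | i) (j | j) <;> simp [hB, Matrix.diagonal_mul, Matrix.one_apply]
    rw [WW, e, Matrix.det_fromBlocks_zero₂₁, Complex.mul_re,
      WW_im (hA.submatrix Sum.inl), WW_im (hA.submatrix Sum.inr)]
    simp [WW]
  rw [VV, VV, VV, Finset.sum_mul_sum, ← Fintype.sum_prod_type']
  refine Fintype.sum_equiv (Equiv.sumArrowEquivProdArrow m n Bool) _ _ fun s => ?_
  rw [hW, mul_pow]
  rfl

lemma VV_reindex {m n : Type*} [Fintype m] [DecidableEq m] [Fintype n] [DecidableEq n] (q : ℕ)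
    (e : m ≃ n) (A : Matrix n n ℂ) : VV q (A.submatrix e e) = VV q A := by
  refine Fintype.sum_equiv (e.arrowCongr (Equiv.refl Bool)) _ _ fun s => ?_
  congr 1
  rw [WW, WW, ← Matrix.det_submatrix_equiv_self e]
  congr 2
  ext i j
  simp [Matrix.diagonal_mul, Matrix.one_apply]

/-- the centred matrix -/
noncomputable def CM (c : ℝ) (f : AddCircle (1:ℝ) → ℝ) (N : ℕ) : Matrix (Fin N) (Fin N) ℂ :=
  (c : ℂ) • ((2 : ℂ) • Tmat f N - 1)

lemma Sq_eq (c : ℝ) (hc : c = 1 ∨ c = -1) (f : AddCircle (1:ℝ) → ℝ) (q N : ℕ) :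
    Sq f q N = ((1 / 2 : ℝ) ^ N) ^ q * VV q (CM c f N) := by
  have hcyl : ∀ s : Fin N → Bool, ∀ t : Fin N → Bool, (∀ i, sgb (t i) = c * sgb (s i)) →
      cylWeight f s = (1 / 2 : ℝ) ^ N * WW (CM c f N) t := by
    intro s t hst
    have e : Matrix.diagonal (fun i => 2 * bc (s i) - 1) * Tmat f N +
      Matrix.diagonal (fun i => 1 - bc (s i)) =
      (((1 / 2 : ℝ)) : ℂ) • (1 + Matrix.diagonal (fun i => ((sgb (t i) : ℝ) : ℂ)) * CM c f N) := by
      ext i j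
      have hcc : (c : ℂ) * c = 1 := by rcases hc with h | h <;> simp [h]
      have hs : ((sgb (s i) : ℝ) : ℂ) = 2 * bc (s i) - 1 := by
        cases s i <;> simp [sgb, bc]
        norm_num
      simp only [Matrix.add_apply, Matrix.diagonal_mul, Matrix.smul_apply, CM, Matrix.sub_apply,
        smul_eq_mul, hst, Complex.ofReal_mul, hs]
      rw [show (c : ℂ) * (2 * bc (s i) - 1) * (c * (2 * Tmat f N i j - (1 : Matrix (Fin N) (Fin N) ℂ) i j))
        = (2 * bc (s i) - 1) * (2 * Tmat f N i j - (1 : Matrix (Fin N) (Fin N) ℂ) i j) * (c * c) by ring, hcc]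
      by_cases hij : i = j
      · subst hij; simp; ring
      · simp [hij]; ring
    rw [cylWeight, e, Matrix.det_smul, Fintype.card_fin, ← Complex.ofReal_pow, Complex.re_ofReal_mul, WW]
  rw [Sq, VV, Finset.mul_sum]
  rcases hc with h | h
  · refine Finset.sum_congr rfl fun s _ => ?_
    rw [hcyl s s (by simp [h]), mul_pow]
  · refine Fintype.sum_equiv ((Equiv.refl (Fin N)).arrowCongr Equiv.boolNot) _ _ fun s => ?_
    rw [hcyl s _ (fun i => ?_), mul_pow]
    rw [h]
    simp
    cases s i <;> simp [sgb]

lemma CM_psd (c : ℝ) (f : AddCircle (1:ℝ) → ℝ) (hmeas : Measurable f)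
    (h0 : ∀ t, 0 ≤ f t) (h1 : ∀ t, f t ≤ 1)
    (hg : ∀ᵐ t : AddCircle (1:ℝ), 0 ≤ c * (2 * f t - 1)) (N : ℕ) : (CM c f N).PosSemidef := by
  have hvol : (volume : Measure (AddCircle (1:ℝ))) = AddCircle.haarAddCircle := by
    rw [AddCircle.volume_eq_smul_haarAddCircle]; simp
  rw [hvol] at hg
  have hfi : Integrable (fun t => (f t : ℂ)) (AddCircle.haarAddCircle (T := (1:ℝ))) := by
    refine Integrable.of_bound (C := 1) (Complex.measurable_ofReal.comp hmeas).aestronglyMeasurable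
      (ae_of_all _ fun t => ?_)
    rw [Complex.norm_real, Real.norm_eq_abs, abs_of_nonneg (h0 t)]; exact h1 t
  have hgi : Integrable (fun t => ((c * (2 * f t - 1) : ℝ) : ℂ)) (AddCircle.haarAddCircle (T := (1:ℝ))) := by
    have := ((hfi.const_mul 2).sub (integrable_const (1:ℂ))).const_mul (c:ℂ)
    refine this.congr (ae_of_all _ fun t => ?_)
    simp
  have hentry : ∀ i j, CM c f N i j = ∫ t : AddCircle (1:ℝ),
      fourier (-(((i : ℕ) : ℤ) - ((j : ℕ) : ℤ))) t * ((c * (2 * f t - 1) : ℝ) : ℂ)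
        ∂AddCircle.haarAddCircle := by
    intro i j
    set k : ℤ := ((i : ℕ) : ℤ) - ((j : ℕ) : ℤ) with hk
    have hone : ∫ t : AddCircle (1:ℝ), fourier (-k) t ∂AddCircle.haarAddCircle
        = (1 : Matrix (Fin N) (Fin N) ℂ) i j := by
      have := fourierCoeff_fourier (T := (1:ℝ)) 0
      have h3 := congrFun this k
      simp only [fourierCoeff, fourier_zero, smul_eq_mul, mul_one] at h3
      rw [h3]
      have : (k = 0) ↔ i = j := by
        rw [hk, sub_eq_zero, Nat.cast_inj, Fin.val_inj]
      by_cases hij : i = j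
      · rw [this.2 hij, hij, Matrix.one_apply_eq]; simp
      · rw [Matrix.one_apply_ne hij, Pi.single_apply, if_neg (by rw [this]; exact hij)]
    have hI := hfi.fourier_smul (-k)
    have hI1 : Integrable (fun t : AddCircle (1:ℝ) => fourier (-k) t) AddCircle.haarAddCircle := by
      simpa using (integrable_const (μ := AddCircle.haarAddCircle (T := (1:ℝ))) (1:ℂ)).fourier_smul (-k)
    simp only [CM, Matrix.smul_apply, Matrix.sub_apply, Tmat, Matrix.of_apply, fhat, fourierCoeff]
    rw [← hone]
    simp only [smul_eq_mul] at hI ⊢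
    rw [← integral_const_mul, ← integral_sub (hI.const_mul 2) hI1, ← integral_const_mul]
    congr 1
    funext t
    push_cast
    ring
  have hij : ∀ i j : Fin N, Integrable (fun t : AddCircle (1:ℝ) =>
      fourier (-(((i : ℕ) : ℤ) - ((j : ℕ) : ℤ))) t * ((c * (2 * f t - 1) : ℝ) : ℂ))
        AddCircle.haarAddCircle := fun i j => hgi.fourier_smul _
  refine Matrix.PosSemidef.of_dotProduct_mulVec_nonneg ?_ fun x => ?_
  · ext i j
    rw [Matrix.conjTranspose_apply, hentry, hentry]
    rw [Complex.star_def, ← integral_conj]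
    congr 1
    funext t
    rw [map_mul, Complex.conj_ofReal, ← fourier_neg]
    congr 3
    ring
  · have : star x ⬝ᵥ (CM c f N *ᵥ x) = ∫ t : AddCircle (1:ℝ),
        ((Complex.normSq (∑ j : Fin N, fourier ((j : ℕ) : ℤ) t * x j) * (c * (2 * f t - 1)) : ℝ) : ℂ)
          ∂AddCircle.haarAddCircle := by
      simp only [dotProduct, Matrix.mulVec, hentry, Pi.star_apply, Finset.mul_sum]
      simp_rw [← integral_mul_const, ← integral_const_mul]
      rw [Finset.sum_congr rfl fun i _ => (integral_finsetSum _ fun j _ =>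
        ((hij i j).mul_const _).const_mul _).symm, ← integral_finsetSum]
      · congr 1
        funext t
        rw [Complex.ofReal_mul (Complex.normSq _), ← Complex.mul_conj, mul_comm (∑ j : Fin N, _) _, map_sum, Finset.sum_mul_sum,
          Finset.sum_mul]
        refine Finset.sum_congr rfl fun i _ => ?_
        rw [Finset.sum_mul]
        refine Finset.sum_congr rfl fun j _ => ?_
        rw [map_mul, ← fourier_neg, neg_sub, sub_eq_add_neg, fourier_add, Complex.star_def]
        ring
      · intro i _
        exact integrable_finsetSum _ fun j _ => ((hij i j).mul_const _).const_mul _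
    rw [this, integral_complex_ofReal, Complex.zero_le_real]
    refine integral_nonneg_of_ae ?_
    filter_upwards [hg] with t ht
    exact mul_nonneg (Complex.normSq_nonneg _) ht

/-- If `f ≤ 1/2` a.e. or `f ≥ 1/2` a.e., then `N ↦ S_N^{(q)}(f)` is submultiplicative. -/
theorem Sq_submultiplicative
    (f : AddCircle (1:ℝ) → ℝ) (hmeas : Measurable f)
    (h0 : ∀ t, 0 ≤ f t) (h1 : ∀ t, f t ≤ 1)
    (hhalf : (∀ᵐ t : AddCircle (1:ℝ), f t ≤ 1 / 2) ∨
      (∀ᵐ t : AddCircle (1:ℝ), 1 / 2 ≤ f t))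
    (q : ℕ) (hq : 2 ≤ q) (M N : ℕ) (hM : 1 ≤ M) (hN : 1 ≤ N) :
    Sq f q (M + N) ≤ Sq f q M * Sq f q N := by
  obtain ⟨c, hc, hg⟩ : ∃ c : ℝ, (c = 1 ∨ c = -1) ∧
      ∀ᵐ t : AddCircle (1:ℝ), 0 ≤ c * (2 * f t - 1) := by
    rcases hhalf with h | h
    · exact ⟨-1, Or.inr rfl, h.mono fun t ht => by linarith⟩
    · exact ⟨1, Or.inl rfl, h.mono fun t ht => by linarith⟩
  have hP := (CM_psd c f hmeas h0 h1 hg (M + N)).submatrix (finSumFinEquiv : Fin M ⊕ Fin N ≃ _)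
  have hb := VV_block q hP
  rw [VV_reindex] at hb
  have e1 : ((CM c f (M + N)).submatrix (finSumFinEquiv : Fin M ⊕ Fin N ≃ _)
      (finSumFinEquiv : Fin M ⊕ Fin N ≃ _)).submatrix Sum.inl Sum.inl = CM c f M := by
    ext i j
    simp [CM, Tmat, Matrix.one_apply]
  have e2 : ((CM c f (M + N)).submatrix (finSumFinEquiv : Fin M ⊕ Fin N ≃ _)
      (finSumFinEquiv : Fin M ⊕ Fin N ≃ _)).submatrix Sum.inr Sum.inr = CM c f N := by
    ext i j
    simp [CM, Tmat, Matrix.one_apply]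
  rw [e1, e2] at hb
  rw [Sq_eq c hc, Sq_eq c hc, Sq_eq c hc]
  calc _ ≤ ((1 / 2 : ℝ) ^ (M + N)) ^ q * (VV q (CM c f M) * VV q (CM c f N)) :=
        mul_le_mul_of_nonneg_left hb (by positivity)
    _ = _ := by rw [pow_add, mul_pow]; ring
end

section
/- Let f : ℝ/ℤ → [0,1] be a Borel function. Then liminf_{N→∞} ( log S_N^{(2)}(f) ) / ( −N·log 2 ) ≥ (1/log 2) · ∫₀¹ log( 2 / ( 1 + (2f(t)−1)² ) ) dt. In other words, the lower correlation dimension of the one-sided stationary determinantal measure μ_f^+ satisfies this lower bound. -/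
open MeasureTheory Matrix Filter

section
open scoped ComplexOrder

/-- principal minor -/
noncomputable def pmin {n : Type*} [DecidableEq n] [Fintype n] (M : Matrix n n ℂ) (s : Finset n) : ℂ :=
  (M.submatrix (Subtype.val : s → n) (Subtype.val : s → n)).det

lemma det_one_add_diag {n : Type*} [DecidableEq n] [Fintype n] (M : Matrix n n ℂ) (d : n → ℂ) :
    (1 + Matrix.diagonal d * M).det = ∑ s : Finset n, (∏ i ∈ s, d i) * pmin M s := by
  have h := (Matrix.detRowAlternating (R := ℂ) (n := n)).toMultilinearMap.map_add_univ
    (fun i => d i • M.row i) (1 : Matrix n n ℂ).row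
  have e1 : (1 + Matrix.diagonal d * M) =
      Matrix.of ((fun i => d i • M.row i) + (1 : Matrix n n ℂ).row) := by
    ext i j
    simp [Matrix.diagonal_mul, add_comm]
  rw [e1]
  refine h.trans (Finset.sum_congr rfl fun s _ => ?_)
  have e2 : s.piecewise (fun i => d i • M.row i) (1 : Matrix n n ℂ).row =
      fun i => (if i ∈ s then d i else 1) • s.piecewise M.row (1 : Matrix n n ℂ).row i := by
    funext i
    by_cases hi : i ∈ s <;> simp [hi]
  rw [e2, MultilinearMap.map_smul_univ]
  rw [pmin, ← Matrix.det_piecewise_one_eq_submatrix_det]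
  simp only [Finset.prod_ite_mem, Finset.univ_inter, smul_eq_mul]
  rfl

lemma det_one_add_eq {n : Type*} [DecidableEq n] [Fintype n] (M : Matrix n n ℂ) :
    (1 + M).det = ∑ s : Finset n, pmin M s := by
  have := det_one_add_diag M (fun _ => 1)
  simpa [Matrix.diagonal_one] using this

lemma pmin_empty {n : Type*} [DecidableEq n] [Fintype n] (M : Matrix n n ℂ) :
    pmin M ∅ = 1 := by
  rw [pmin]; exact Matrix.det_isEmpty

lemma det_one_add_psd {n : Type*} [DecidableEq n] [Fintype n] {M : Matrix n n ℂ}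
    (hM : M.PosSemidef) : 1 ≤ (1 + M).det.re := by
  rw [det_one_add_eq, Complex.re_sum, ← Finset.add_sum_erase _ _ (Finset.mem_univ ∅), pmin_empty]
  have : 0 ≤ ∑ s ∈ Finset.univ.erase (∅ : Finset n), (pmin M s).re :=
    Finset.sum_nonneg fun s _ => (Complex.nonneg_iff.mp (hM.submatrix _).det_nonneg).1
  simpa using this

lemma pmin_sq_le {n : Type*} [DecidableEq n] [Fintype n] (A : Matrix n n ℂ) (s : Finset n) :
    ‖pmin A s‖ ^ 2 ≤ (pmin (A * Aᴴ) s).re := by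
  have hp : (A * Aᴴ).PosSemidef := Matrix.posSemidef_self_mul_conjTranspose A
  by_cases h : pmin A s = 0
  · rw [h]
    simpa [pmin] using (Complex.nonneg_iff.mp (hp.submatrix (Subtype.val : s → n)).det_nonneg).1
  set B : Matrix s s ℂ := A.submatrix (Subtype.val : s → n) (Subtype.val : s → n) with hB
  set C : Matrix s {x // x ∉ s} ℂ := A.submatrix Subtype.val Subtype.val with hC
  have hu : IsUnit B.det := isUnit_iff_ne_zero.mpr h
  have e1 : (A * Aᴴ).submatrix (Subtype.val : s → n) (Subtype.val : s → n) = B * Bᴴ + C * Cᴴ := by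
    ext i j
    simp only [Matrix.submatrix_apply, Matrix.mul_apply, Matrix.add_apply, Matrix.conjTranspose_apply, hB, hC]
    rw [← Fintype.sum_subtype_add_sum_subtype (fun x => x ∈ s)]
    congr 1
    exact Finset.sum_congr (by ext; simp) fun _ _ => rfl
  have e2 : B * Bᴴ + C * Cᴴ = B * (1 + (B⁻¹ * C) * (B⁻¹ * C)ᴴ) * Bᴴ := by
    have h3 : B * B⁻¹ = 1 := Matrix.mul_nonsing_inv _ hu
    have h4 : (B⁻¹)ᴴ * Bᴴ = 1 := by rw [← Matrix.conjTranspose_mul, h3, Matrix.conjTranspose_one]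
    rw [Matrix.conjTranspose_mul, mul_add, add_mul, mul_one]
    congr 1
    calc C * Cᴴ = (B * B⁻¹) * C * Cᴴ * ((B⁻¹)ᴴ * Bᴴ) := by rw [h3, h4]; simp
      _ = _ := by simp only [Matrix.mul_assoc]
  rw [pmin, pmin, e1, e2, Matrix.det_mul, Matrix.det_mul, Matrix.det_conjTranspose, ← hB]
  have h5 := det_one_add_psd (Matrix.posSemidef_self_mul_conjTranspose (B⁻¹ * C))
  set D := (1 + (B⁻¹ * C) * (B⁻¹ * C)ᴴ).det
  have : B.det * D * star B.det = ((‖B.det‖ ^ 2 : ℝ) : ℂ) * D := by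
    rw [mul_right_comm, Complex.star_def, Complex.mul_conj, Complex.normSq_eq_norm_sq]
  rw [this, Complex.re_ofReal_mul]
  nlinarith [sq_nonneg ‖B.det‖]

lemma sum_pmin_le {n : Type*} [DecidableEq n] [Fintype n] (A : Matrix n n ℂ) :
    ∑ s : Finset n, (pmin A s).re ^ 2 ≤ (1 + A * Aᴴ).det.re := by
  rw [det_one_add_eq, Complex.re_sum]
  refine Finset.sum_le_sum fun s _ => le_trans ?_ (pmin_sq_le A s)
  rw [← sq_abs]
  exact pow_le_pow_left₀ (abs_nonneg _) (Complex.abs_re_le_norm _) 2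

/-- sign -/
def sg (b : Bool) : ℝ := if b then 1 else -1

lemma parseval {N : ℕ} (c : Finset (Fin N) → ℝ) :
    ∑ ε : Fin N → Bool, (∑ s, (∏ i ∈ s, sg (ε i)) * c s) ^ 2 = 2 ^ N * ∑ s, c s ^ 2 := by
  have key : ∀ s t : Finset (Fin N), ∑ ε : Fin N → Bool, (∏ i ∈ s, sg (ε i)) * (∏ i ∈ t, sg (ε i))
      = if s = t then 2 ^ N else 0 := by
    intro s t
    have h1 : ∀ ε : Fin N → Bool, (∏ i ∈ s, sg (ε i)) * (∏ i ∈ t, sg (ε i)) =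
        ∏ i, ((if i ∈ s then sg (ε i) else 1) * (if i ∈ t then sg (ε i) else 1)) := by
      intro ε
      rw [Finset.prod_mul_distrib]; simp [Finset.prod_ite_mem]
    simp_rw [h1]
    rw [← Fintype.prod_sum (fun i b => ((if i ∈ s then sg b else 1) * (if i ∈ t then sg b else 1)))]
    split_ifs with hst
    · subst hst
      rw [Finset.prod_congr rfl (g := fun _ => (2:ℝ))]
      · simp
      · intro i _
        by_cases hi : i ∈ s <;> simp [hi, sg] <;> norm_num
    · obtain ⟨i, hi⟩ : ∃ i, ¬ (i ∈ s ↔ i ∈ t) := by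
        by_contra hh; push Not at hh; exact hst (Finset.ext hh)
      refine Finset.prod_eq_zero (Finset.mem_univ i) ?_
      by_cases h1 : i ∈ s <;> by_cases h2 : i ∈ t <;> simp_all [sg]
  calc _ = ∑ ε : Fin N → Bool, ∑ s, ∑ t, ((∏ i ∈ s, sg (ε i)) * (∏ i ∈ t, sg (ε i))) * (c s * c t) := by
        refine Finset.sum_congr rfl fun ε _ => ?_
        rw [sq, Finset.sum_mul_sum]
        refine Finset.sum_congr rfl fun s _ => Finset.sum_congr rfl fun t _ => by ring
    _ = ∑ s, ∑ t, (∑ ε : Fin N → Bool, (∏ i ∈ s, sg (ε i)) * (∏ i ∈ t, sg (ε i))) * (c s * c t) := by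
        rw [Finset.sum_comm]
        refine Finset.sum_congr rfl fun s _ => ?_
        rw [Finset.sum_comm]
        refine Finset.sum_congr rfl fun t _ => ?_
        rw [Finset.sum_mul]
    _ = _ := by
        simp_rw [key]
        simp [Finset.mul_sum, sq]

/-- `2T-1` -/
noncomputable def Amat (f : AddCircle (1:ℝ) → ℝ) (N : ℕ) : Matrix (Fin N) (Fin N) ℂ :=
  (2:ℂ) • Tmat f N - 1

lemma cylWeight_eq (f : AddCircle (1:ℝ) → ℝ) {N : ℕ} (ε : Fin N → Bool) :
    cylWeight f ε = (2⁻¹ : ℝ) ^ N * ∑ s, (∏ i ∈ s, sg (ε i)) * (pmin (Amat f N) s).re := by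
  have e : (Matrix.diagonal (fun i => 2 * bc (ε i) - 1) * Tmat f N +
      Matrix.diagonal (fun i => 1 - bc (ε i))) =
      (2⁻¹ : ℂ) • (1 + Matrix.diagonal (fun i => ((sg (ε i) : ℝ) : ℂ)) * Amat f N) := by
    ext i j
    have hs : ((sg (ε i) : ℝ) : ℂ) = 2 * bc (ε i) - 1 := by
      cases ε i <;> simp [sg, bc]; norm_num
    by_cases hij : i = j
    · subst hij
      simp [Amat, Matrix.diagonal_mul, hs]; ring
    · simp [Amat, Matrix.diagonal_mul, hs, hij]; ring
  rw [cylWeight, e, Matrix.det_smul, det_one_add_diag, Fintype.card_fin]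
  have : (2⁻¹ : ℂ) ^ N = (((2⁻¹ : ℝ) ^ N : ℝ) : ℂ) := by push_cast; rfl
  rw [this, Complex.re_ofReal_mul, Complex.re_sum]
  congr 1
  refine Finset.sum_congr rfl fun s _ => ?_
  rw [← Complex.ofReal_prod, Complex.re_ofReal_mul]

lemma Sq_eq_s18 (f : AddCircle (1:ℝ) → ℝ) (N : ℕ) :
    Sq f 2 N = (2⁻¹ : ℝ) ^ N * ∑ s, (pmin (Amat f N) s).re ^ 2 := by
  rw [Sq]
  simp_rw [cylWeight_eq, mul_pow _ _ 2]
  rw [← Finset.mul_sum, parseval, ← mul_assoc]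
  congr 1
  rw [sq, mul_assoc, ← mul_pow]; norm_num

lemma Sq_ge (f : AddCircle (1:ℝ) → ℝ) (N : ℕ) : (2⁻¹ : ℝ) ^ N ≤ Sq f 2 N := by
  rw [Sq_eq_s18]
  have : 1 ≤ ∑ s, (pmin (Amat f N) s).re ^ 2 := by
    have := Finset.single_le_sum (f := fun s => (pmin (Amat f N) s).re ^ 2)
      (fun s _ => sq_nonneg _) (Finset.mem_univ ∅)
    simpa [pmin_empty] using this
  nlinarith [pow_pos (show (0:ℝ) < 2⁻¹ by norm_num) N]

lemma tangent_ineq {x l : ℝ} (hx : |x| ≤ 1) (hl : |l| ≤ 1) :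
    Real.log (1 + l ^ 2) + 2 * l / (1 + l ^ 2) * (x - l) ≤ Real.log (1 + x ^ 2) := by
  have hd : ∀ y : ℝ, HasDerivAt (fun y => Real.log (1 + y ^ 2)) (2 * y / (1 + y ^ 2)) y := by
    intro y
    have h1 : HasDerivAt (fun y : ℝ => 1 + y ^ 2) (2 * y) y := by
      simpa using (hasDerivAt_pow 2 y).const_add 1
    exact h1.log (by positivity)
  have hc : ConvexOn ℝ (Set.Icc (-1) 1) (fun y : ℝ => Real.log (1 + y ^ 2)) := by
    apply MonotoneOn.convexOn_of_deriv (convex_Icc _ _)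
    · exact fun y _ => (hd y).continuousAt.continuousWithinAt
    · exact fun y _ => (hd y).differentiableAt.differentiableWithinAt
    · intro a ha b hb hab
      rw [interior_Icc] at ha hb
      rw [(hd a).deriv, (hd b).deriv, div_le_div_iff₀ (by positivity) (by positivity)]
      have : 0 ≤ 1 - a * b := by nlinarith [ha.1, ha.2, hb.1, hb.2, sq_nonneg (a-b), sq_nonneg (a+b)]
      nlinarith [mul_nonneg (sub_nonneg.mpr hab) this]
  have hx' := abs_le.mp hx
  have hl' := abs_le.mp hl
  rcases lt_trichotomy x l with h | h | h
  · have := hc.slope_le_of_hasDerivAt (x := x) (y := l) hx' hl' h (hd l)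
    rw [slope_def_field, div_le_iff₀ (by linarith)] at this
    linarith
  · subst h; simp
  · have := hc.le_slope_of_hasDerivAt (x := l) (y := x) hl' hx' h (hd l)
    rw [slope_def_field, le_div_iff₀ (by linarith)] at this
    linarith

/-- trigonometric polynomial -/
noncomputable def tp {N : ℕ} (u : Fin N → ℂ) (t : AddCircle (1:ℝ)) : ℂ :=
  ∑ j : Fin N, fourier (((j : ℕ) : ℤ)) t * u j

lemma tp_cont {N : ℕ} (u : Fin N → ℂ) : Continuous (tp u) := by
  unfold tp
  fun_prop

lemma vol_eq : (AddCircle.haarAddCircle : Measure (AddCircle (1:ℝ))) = volume := by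
  rw [AddCircle.volume_eq_smul_haarAddCircle]; simp

lemma bdd_int {h : AddCircle (1:ℝ) → ℝ} (hm : Measurable h) {C : ℝ} (hb : ∀ t, |h t| ≤ C) :
    Integrable h volume :=
  Integrable.of_bound hm.aestronglyMeasurable C (Eventually.of_forall hb)

lemma w_int {N : ℕ} (u : Fin N → ℂ) : Integrable (fun t => ‖tp u t‖ ^ 2) volume := by
  have : Continuous (fun t => ‖tp u t‖ ^ 2) := (tp_cont u).norm.pow 2
  exact this.integrable_of_hasCompactSupport (HasCompactSupport.of_compactSpace _)

lemma hw_int {N : ℕ} (u : Fin N → ℂ) {h : AddCircle (1:ℝ) → ℝ} (hm : Measurable h) {C : ℝ}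
    (hb : ∀ t, |h t| ≤ C) : Integrable (fun t => h t * ‖tp u t‖ ^ 2) volume :=
  (w_int u).bdd_mul hm.aestronglyMeasurable (Eventually.of_forall hb)

lemma quad_form {N : ℕ} (u : Fin N → ℂ) {h : AddCircle (1:ℝ) → ℝ} (hm : Measurable h) {C : ℝ}
    (hb : ∀ t, |h t| ≤ C) :
    star u ⬝ᵥ (Tmat h N *ᵥ u) = ((∫ t, h t * ‖tp u t‖ ^ 2 : ℝ) : ℂ) := by
  rw [← integral_complex_ofReal]
  have hi : ∀ i j : Fin N, Integrable (fun t : AddCircle (1:ℝ) =>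
      star (u i) * (fourier (-(((i : ℕ) : ℤ) - ((j : ℕ) : ℤ))) t * (h t : ℂ) * u j)) volume := by
    intro i j
    apply Integrable.const_mul
    apply Integrable.mul_const
    have h1 : Integrable (fun t => (h t : ℂ)) (AddCircle.haarAddCircle (T := 1)) := by
      rw [vol_eq]; exact (bdd_int hm hb).ofReal
    have := h1.fourier_smul (-(((i : ℕ) : ℤ) - ((j : ℕ) : ℤ)))
    rw [vol_eq] at this
    exact this
  have e : ∀ t, ((h t * ‖tp u t‖ ^ 2 : ℝ) : ℂ) = ∑ i : Fin N, ∑ j : Fin N,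
      star (u i) * (fourier (-(((i : ℕ) : ℤ) - ((j : ℕ) : ℤ))) t * (h t : ℂ) * u j) := by
    intro t
    have : ((‖tp u t‖ ^ 2 : ℝ) : ℂ) = star (tp u t) * tp u t := by
      rw [Complex.star_def, mul_comm, Complex.mul_conj, Complex.normSq_eq_norm_sq]
    rw [Complex.ofReal_mul, this, tp, star_sum, Finset.sum_mul_sum, Finset.mul_sum]
    refine Finset.sum_congr rfl fun i _ => ?_
    rw [Finset.mul_sum]
    refine Finset.sum_congr rfl fun j _ => ?_
    rw [neg_sub, sub_eq_add_neg, fourier_add, fourier_neg]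
    simp only [star_mul', Complex.star_def]
    ring
  simp_rw [e]
  rw [integral_finsetSum _ fun i _ => integrable_finsetSum _ fun j _ => hi i j]
  simp only [dotProduct, mulVec, Pi.star_apply, Finset.mul_sum]
  refine Finset.sum_congr rfl fun i _ => ?_
  rw [integral_finsetSum _ fun j _ => hi i j]
  refine Finset.sum_congr rfl fun j _ => ?_
  rw [integral_const_mul, integral_mul_const]
  simp only [Tmat, Matrix.of_apply, fhat, fourierCoeff, smul_eq_mul, vol_eq]

lemma Tmat_one (N : ℕ) : Tmat (fun _ => 1) N = 1 := by
  ext i j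
  have := congrFun (fourierCoeff_fourier (T := 1) 0) (((i : ℕ) : ℤ) - ((j : ℕ) : ℤ))
  have h2 : (fun t : AddCircle (1:ℝ) => (((1:ℝ)) : ℂ)) = (fourier 0 : C(AddCircle (1:ℝ), ℂ)) := by
    funext t; simp
  simp only [Tmat, Matrix.of_apply, fhat]
  rw [h2, this, Pi.single_apply, Matrix.one_apply]
  congr 1
  rw [sub_eq_zero, Nat.cast_inj, Fin.val_inj]

lemma Tmat_herm (f : AddCircle (1:ℝ) → ℝ) (N : ℕ) : (Tmat f N).IsHermitian := by
  ext i j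
  simp only [Matrix.conjTranspose_apply, Tmat, Matrix.of_apply, fhat, fourierCoeff, Complex.star_def,
    ← integral_conj]
  congr 1
  funext t
  rw [smul_eq_mul, smul_eq_mul, map_mul, Complex.conj_ofReal, ← fourier_neg]
  congr 2
  simp

lemma Amat_herm (f : AddCircle (1:ℝ) → ℝ) (N : ℕ) : (Amat f N).IsHermitian := by
  refine Matrix.IsHermitian.sub ?_ Matrix.isHermitian_one
  rw [Matrix.IsHermitian, Matrix.conjTranspose_smul, (Tmat_herm f N).eq]
  simp

lemma det_eq_prod {n : Type*} [DecidableEq n] [Fintype n] {A : Matrix n n ℂ} (hA : A.IsHermitian) :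
    (1 + A * Aᴴ).det = ((∏ i, (1 + hA.eigenvalues i ^ 2) : ℝ) : ℂ) := by
  rw [hA.eq]
  have hs := hA.spectral_theorem
  rw [Unitary.conjStarAlgAut_apply] at hs
  set U : Matrix n n ℂ := (hA.eigenvectorUnitary : Matrix n n ℂ)
  have hU : U * star U = 1 := Unitary.coe_mul_star_self _
  have hU' : star U * U = 1 := Unitary.coe_star_mul_self _
  set D : Matrix n n ℂ := diagonal (RCLike.ofReal ∘ hA.eigenvalues)
  have e : 1 + A * A = U * (1 + D * D) * star U := by
    have : A * A = U * (D * D) * star U := by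
      calc A * A = (U * D * star U) * (U * D * star U) := by rw [← hs]
        _ = U * D * (star U * U) * D * star U := by simp only [Matrix.mul_assoc]
        _ = _ := by rw [hU']; simp only [Matrix.mul_assoc, Matrix.mul_one, Matrix.one_mul]
    rw [this, mul_add, add_mul, mul_one, hU]
  rw [e, Matrix.det_mul, mul_comm, ← Matrix.det_mul, ← mul_assoc, hU', one_mul]
  have : 1 + D * D = diagonal (fun i => 1 + (hA.eigenvalues i : ℂ) ^ 2) := by
    rw [Matrix.diagonal_mul_diagonal, ← Matrix.diagonal_one, Matrix.diagonal_add]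
    congr 1; funext i; simp [sq]
  rw [this, Matrix.det_diagonal]
  push_cast; rfl

lemma sum_w {N : ℕ} {A : Matrix (Fin N) (Fin N) ℂ} (hA : A.IsHermitian) (t : AddCircle (1:ℝ)) :
    ∑ k, ‖tp (hA.eigenvectorBasis k) t‖ ^ 2 = N := by
  set v : EuclideanSpace ℂ (Fin N) :=
    WithLp.toLp 2 (fun j : Fin N => star (fourier (((j : ℕ) : ℤ)) t : ℂ)) with hv
  have h1 := hA.eigenvectorBasis.sum_sq_norm_inner_left v
  have h2 : ∀ k, inner ℂ v (hA.eigenvectorBasis k) = tp (hA.eigenvectorBasis k) t := by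
    intro k
    simp [hv, tp, PiLp.inner_apply, mul_comm]
  have h3 : ‖v‖ ^ 2 = N := by
    rw [EuclideanSpace.norm_sq_eq]
    simp [hv, fourier_apply, -natCast_zsmul, Circle.norm_coe]
  rw [← h3]
  simp_rw [← h2]
  exact h1

lemma berezin (f : AddCircle (1:ℝ) → ℝ) (hmeas : Measurable f)
    (h0 : ∀ t, 0 ≤ f t) (h1 : ∀ t, f t ≤ 1) (N : ℕ) :
    ∑ k, Real.log (1 + (Amat_herm f N).eigenvalues k ^ 2) ≤
      N * ∫ t : AddCircle (1:ℝ), Real.log (1 + (2 * f t - 1) ^ 2) := by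
  set hA := Amat_herm f N
  have hfb : ∀ t, |f t| ≤ 1 := fun t => abs_le.mpr ⟨by linarith [h0 t], h1 t⟩
  have hgb : ∀ t, |2 * f t - 1| ≤ 1 := fun t => abs_le.mpr ⟨by linarith [h0 t], by linarith [h1 t]⟩
  have hgm : Measurable (fun t => 2 * f t - 1) := by fun_prop
  have hφm : Measurable (fun t => Real.log (1 + (2 * f t - 1) ^ 2)) := by fun_prop
  have hφb : ∀ t, |Real.log (1 + (2 * f t - 1) ^ 2)| ≤ 1 := by
    intro t
    have hs : (2 * f t - 1) ^ 2 ≤ 1 := (sq_le_one_iff_abs_le_one _).mpr (hgb t)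
    rw [abs_of_nonneg (Real.log_nonneg (by nlinarith [sq_nonneg (2 * f t - 1)]))]
    have := Real.log_le_sub_one_of_pos (show 0 < 1 + (2 * f t - 1) ^ 2 by positivity)
    linarith
  have hw1 : ∀ k, ∫ t, ‖tp (hA.eigenvectorBasis k) t‖ ^ 2 = 1 := by
    intro k
    have := quad_form (hA.eigenvectorBasis k) (h := fun _ => 1) measurable_const (C := 1) (by simp)
    rw [Tmat_one, one_mulVec] at this
    have h2 : star (hA.eigenvectorBasis k : Fin N → ℂ) ⬝ᵥ (hA.eigenvectorBasis k) = 1 := by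
      rw [dotProduct_comm, ← EuclideanSpace.inner_eq_star_dotProduct]
      exact inner_self_eq_one_of_norm_eq_one (hA.eigenvectorBasis.norm_eq_one k)
    rw [h2] at this
    simpa using (Complex.ofReal_injective (by simpa using this)).symm
  have hev : ∀ k, hA.eigenvalues k = ∫ t, (2 * f t - 1) * ‖tp (hA.eigenvectorBasis k) t‖ ^ 2 := by
    intro k
    have hm2 : ∀ v : Fin N → ℂ, Amat f N *ᵥ v = ((2:ℂ) • Tmat f N - 1) *ᵥ v := fun _ => rfl
    rw [hA.eigenvalues_eq k, hm2, sub_mulVec, smul_mulVec, dotProduct_sub, dotProduct_smul,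
      one_mulVec, quad_form _ hmeas hfb]
    have h2 : star (hA.eigenvectorBasis k : Fin N → ℂ) ⬝ᵥ (hA.eigenvectorBasis k) = 1 := by
      rw [dotProduct_comm, ← EuclideanSpace.inner_eq_star_dotProduct]
      exact inner_self_eq_one_of_norm_eq_one (hA.eigenvectorBasis.norm_eq_one k)
    rw [h2]
    have e : ∀ t, (2 * f t - 1) * ‖tp (hA.eigenvectorBasis k) t‖ ^ 2 =
      2 * (f t * ‖tp (hA.eigenvectorBasis k) t‖ ^ 2) - ‖tp (hA.eigenvectorBasis k) t‖ ^ 2 := by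
        intro t; ring
    simp_rw [e]
    rw [integral_sub ((hw_int _ hmeas hfb).const_mul 2) (w_int _), integral_const_mul, hw1]
    simp
  have hevb : ∀ k, |hA.eigenvalues k| ≤ 1 := by
    intro k
    rw [hev]
    refine ((abs_integral_le_integral_abs).trans ?_).trans_eq (hw1 k)
    refine integral_mono (hw_int _ hgm hgb).abs (w_int _) fun t => ?_
    show |(2 * f t - 1) * ‖tp (hA.eigenvectorBasis k) t‖ ^ 2| ≤ _
    rw [abs_mul, abs_of_nonneg (sq_nonneg ‖_‖)]
    exact mul_le_of_le_one_left (sq_nonneg _) (hgb t)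
  have step : ∀ k, Real.log (1 + hA.eigenvalues k ^ 2) ≤
      ∫ t, Real.log (1 + (2 * f t - 1) ^ 2) * ‖tp (hA.eigenvectorBasis k) t‖ ^ 2 := by
    intro k
    set l := hA.eigenvalues k with hl
    set a := Real.log (1 + l ^ 2)
    set b := 2 * l / (1 + l ^ 2)
    have i1 := w_int (hA.eigenvectorBasis k : Fin N → ℂ)
    have i2 := hw_int (hA.eigenvectorBasis k : Fin N → ℂ) hgm hgb
    have e : a = ∫ t, ((a - b * l) * ‖tp (hA.eigenvectorBasis k) t‖ ^ 2 +
        b * ((2 * f t - 1) * ‖tp (hA.eigenvectorBasis k) t‖ ^ 2)) := by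
      rw [integral_add (i1.const_mul _) (i2.const_mul _), integral_const_mul, integral_const_mul,
        ← hev, hw1]
      ring
    rw [e]
    refine integral_mono ((i1.const_mul _).add (i2.const_mul _)) (hw_int _ hφm hφb) fun t => ?_
    have := mul_le_mul_of_nonneg_right (tangent_ineq (hgb t) (hevb k))
      (sq_nonneg ‖tp (hA.eigenvectorBasis k) t‖)
    refine le_trans (le_of_eq ?_) this
    show (a - b * l) * ‖tp (hA.eigenvectorBasis k) t‖ ^ 2 +
        b * ((2 * f t - 1) * ‖tp (hA.eigenvectorBasis k) t‖ ^ 2) =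
        (a + b * (2 * f t - 1 - l)) * ‖tp (hA.eigenvectorBasis k) t‖ ^ 2
    ring
  refine (Finset.sum_le_sum fun k _ => step k).trans (le_of_eq ?_)
  rw [← integral_finsetSum _ fun k _ => hw_int _ hφm hφb]
  simp_rw [← Finset.mul_sum, sum_w]
  rw [integral_mul_const, mul_comm]

lemma log_Sq_le (f : AddCircle (1:ℝ) → ℝ) (hmeas : Measurable f)
    (h0 : ∀ t, 0 ≤ f t) (h1 : ∀ t, f t ≤ 1) (N : ℕ) :
    Real.log (Sq f 2 N) ≤ - N * ∫ t : AddCircle (1:ℝ), Real.log (2 / (1 + (2 * f t - 1) ^ 2)) := by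
  have hpos : 0 < Sq f 2 N := lt_of_lt_of_le (by positivity) (Sq_ge f N)
  have hS : Sq f 2 N ≤ (2⁻¹ : ℝ) ^ N * ∏ i, (1 + (Amat_herm f N).eigenvalues i ^ 2) := by
    rw [Sq_eq_s18]
    have := sum_pmin_le (Amat f N)
    rw [det_eq_prod (Amat_herm f N), Complex.ofReal_re] at this
    gcongr
  have h2 := Real.log_le_log hpos hS
  rw [Real.log_mul (by positivity) (Finset.prod_pos fun i _ => by positivity).ne',
    Real.log_prod (fun i _ => by positivity), Real.log_pow, Real.log_inv] at h2
  have h3 := berezin f hmeas h0 h1 N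
  have hφm : Measurable (fun t => Real.log (1 + (2 * f t - 1) ^ 2)) := by fun_prop
  have hφb : ∀ t, |Real.log (1 + (2 * f t - 1) ^ 2)| ≤ 1 := by
    intro t
    have hs : (2 * f t - 1) ^ 2 ≤ 1 := by nlinarith [h0 t, h1 t]
    rw [abs_of_nonneg (Real.log_nonneg (by nlinarith [sq_nonneg (2 * f t - 1)]))]
    have := Real.log_le_sub_one_of_pos (show 0 < 1 + (2 * f t - 1) ^ 2 by positivity)
    linarith
  have e : ∫ t : AddCircle (1:ℝ), Real.log (2 / (1 + (2 * f t - 1) ^ 2)) =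
      Real.log 2 - ∫ t : AddCircle (1:ℝ), Real.log (1 + (2 * f t - 1) ^ 2) := by
    have : ∀ t, Real.log (2 / (1 + (2 * f t - 1) ^ 2)) =
        Real.log 2 - Real.log (1 + (2 * f t - 1) ^ 2) := fun t =>
      Real.log_div (by norm_num) (by positivity)
    simp_rw [this]
    rw [integral_sub (integrable_const _) (bdd_int hφm hφb)]
    simp [Measure.real, AddCircle.measure_univ]
  rw [e]
  linarith

end

/-- Lower bound for the lower correlation dimension of `μ_f^+`:
`liminf_N log S_N^{(2)}(f) / (-N log 2) ≥ (1/log 2)·∫₀¹ log(2/(1+(2f(t)-1)²)) dt`. -/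
theorem lower_correlation_dimension_bound
    (f : AddCircle (1:ℝ) → ℝ) (hmeas : Measurable f)
    (h0 : ∀ t, 0 ≤ f t) (h1 : ∀ t, f t ≤ 1) :
    (1 / Real.log 2) *
        ∫ t : AddCircle (1:ℝ), Real.log (2 / (1 + (2 * f t - 1) ^ 2)) ≤
      liminf (fun N : ℕ => Real.log (Sq f 2 N) / (-(N : ℝ) * Real.log 2)) atTop := by
  have hl2 : 0 < Real.log 2 := Real.log_pos (by norm_num)
  apply le_liminf_of_le
  · apply IsCoboundedUnder.of_frequently_le (a := 1)
    apply Eventually.frequently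
    filter_upwards [eventually_ge_atTop 1] with N hN
    have hN' : (0:ℝ) < N := by exact_mod_cast hN
    have h := Real.log_le_log (by positivity) (Sq_ge f N)
    rw [Real.log_pow, Real.log_inv] at h
    rw [neg_mul, div_neg, neg_le, le_div_iff₀ (by positivity)]
    linarith
  · filter_upwards [eventually_ge_atTop 1] with N hN
    have hN' : (0:ℝ) < N := by exact_mod_cast hN
    have h := log_Sq_le f hmeas h0 h1 N
    rw [neg_mul, div_neg, le_neg, div_le_iff₀ (by positivity)]
    refine h.trans (le_of_eq ?_)
    field_simp
end
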